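/- arXiv:2103.12008 — 2 statements merged into one kernel-verified Lean document; each statement's English description precedes it below -/
import Mathlib

section
/- Assume S[ω] and S[μ] are integrally closed (i.e. f,g ∉ S^{p∧p²}), h₁ ≠ 0, h₂ ≠ 0, and fg ∈ S^{p∧p²}. Let a₁,…,a_p ∈ A and set y := p^{−1} Σ_{i=1}^{p} a_i (μ−h₂)^{p−i} (ω−h₁)^{i−1} ∈ K. Then y ∈ R if and only if a_{i−1}h₂ + a_i h₁ ∈ P for all 2 ≤ i ≤ p, where P = (p, ω−h₁, μ−h₂)A. -/
/-- A height one prime ideal of a commutative ring. -/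
def IsHeightOnePrime {S : Type*} [CommRing S] (P : Ideal S) : Prop :=
  ∃ hP : P.IsPrime, Order.height (⟨P, hP⟩ : PrimeSpectrum S) = 1

/-- `c ∈ S` is square free if `P S_P = c S_P` for every height one prime `P` containing `c`. -/
def PaperSquarefree {S : Type*} [CommRing S] (c : S) : Prop :=
  ∀ (P : Ideal S) (hP : P.IsPrime), Order.height (⟨P, hP⟩ : PrimeSpectrum S) = 1 → c ∈ P →
    haveI := hP
    Ideal.map (algebraMap S (Localization.AtPrime P)) P =
      Ideal.span {algebraMap S (Localization.AtPrime P) c}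

/-- Two elements satisfy `𝒜₁` if no height one prime contains both of them. -/
def SatisfiesA1 {S : Type*} [CommRing S] (f g : S) : Prop :=
  ∀ P : Ideal S, IsHeightOnePrime P → ¬(f ∈ P ∧ g ∈ P)

/-- The depth of a module over a local ring: the supremum of the lengths of
regular sequences on `M` contained in the maximal ideal. -/
noncomputable def modDepth (S : Type*) [CommRing S] [IsLocalRing S]
    (M : Type*) [AddCommGroup M] [Module S M] : ℕ∞ :=
  sSup {n : ℕ∞ | ∃ rs : List S, (rs.length : ℕ∞) = n ∧
    (∀ r ∈ rs, r ∈ IsLocalRing.maximalIdeal S) ∧ RingTheory.Sequence.IsRegular M rs}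

/-- A commutative ring is Cohen-Macaulay if each of its localizations at a prime
has depth equal to its Krull dimension. -/
def IsCMRing (R : Type*) [CommRing R] : Prop :=
  ∀ (Q : Ideal R) (hQ : Q.IsPrime),
    haveI := hQ
    (modDepth (Localization.AtPrime Q) (Localization.AtPrime Q) : WithBot ℕ∞) =
      ringKrullDim (Localization.AtPrime Q)

/-- The `n`-th symbolic power of a prime ideal `P`, i.e. `Pⁿ A_P ∩ A`. -/
noncomputable def symbPow {A : Type*} [CommRing A] (P : Ideal A) (hP : P.IsPrime) (n : ℕ) :
    Ideal A :=
  haveI := hP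
  Ideal.comap (algebraMap A (Localization.AtPrime P))
    (Ideal.map (algebraMap A (Localization.AtPrime P)) (P ^ n))

/-- `ω`, as an element of the subalgebra `A = S[ω,μ]`. -/
noncomputable def omegaA {S : Type*} [CommRing S] {K : Type*} [Field K] [Algebra S K]
    (ω μ : K) : Algebra.adjoin S ({ω, μ} : Set K) :=
  ⟨ω, Algebra.subset_adjoin (Set.mem_insert _ _)⟩

/-- `μ`, as an element of the subalgebra `A = S[ω,μ]`. -/
noncomputable def muA {S : Type*} [CommRing S] {K : Type*} [Field K] [Algebra S K]
    (ω μ : K) : Algebra.adjoin S ({ω, μ} : Set K) :=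
  ⟨μ, Algebra.subset_adjoin (Set.mem_insert_of_mem _ rfl)⟩

/-- The ideal `P = (p, ω−h₁, μ−h₂)` of `A = S[ω,μ]`. -/
noncomputable def Pid {S : Type*} [CommRing S] {K : Type*} [Field K] [Algebra S K]
    (p : ℕ) (ω μ : K) (h₁ h₂ : S) : Ideal (Algebra.adjoin S ({ω, μ} : Set K)) :=
  Ideal.span {(p : Algebra.adjoin S ({ω, μ} : Set K)),
    omegaA ω μ - algebraMap S _ h₁, muA ω μ - algebraMap S _ h₂}

/-- The colon module `(A :_K N) = {x ∈ K : x·N ⊆ A}`, as an `S`-submodule of `K`. -/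
noncomputable def colonSubmodule (S : Type*) [CommRing S] (K : Type*) [Field K] [Algebra S K]
    (A : Subalgebra S K) (N : Set K) : Submodule S K where
  carrier := {x : K | ∀ z ∈ N, x * z ∈ A}
  add_mem' := fun hx hy z hz => by
    simpa [add_mul] using add_mem (hx z hz) (hy z hz)
  zero_mem' := fun z hz => by simpa using A.zero_mem
  smul_mem' := fun c x hx z hz => by
    rw [Algebra.smul_def, mul_assoc]
    exact mul_mem (A.algebraMap_mem c) (hx z hz)

/-- `M` admits a free resolution `0 → Sⁿ → Sᵐ → M → 0`; for a finitely generated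
module over a Noetherian local ring this says exactly `pd_S(M) ≤ 1`. -/
def HasFreeResLengthLE1 (S : Type*) [CommRing S] (M : Type*) [AddCommGroup M] [Module S M] :
    Prop :=
  ∃ (n m : ℕ) (φ : (Fin n → S) →ₗ[S] (Fin m → S)) (ψ : (Fin m → S) →ₗ[S] M),
    Function.Injective φ ∧ Function.Surjective ψ ∧ LinearMap.range φ = LinearMap.ker ψ

/-- The ideal `Q` contains an `S`-regular sequence of length three, i.e. `Q` has grade
(at least) three. -/
def ContainsRegSeq3 (S : Type*) [CommRing S] (Q : Ideal S) : Prop :=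
  ∃ rs : List S, rs.length = 3 ∧ (∀ r ∈ rs, r ∈ Q) ∧ RingTheory.Sequence.IsRegular S rs



theorem aux_quad {R : Type*} [CommRing R] {p : ℕ} (hp : p.Prime) (u h : R) :
    ∃ q, (u + h) ^ p = u ^ p + h ^ p + (p : R) * (h ^ (p - 1) * u + u ^ 2 * q) := by
  obtain ⟨n, rfl⟩ : ∃ n, p = n + 2 := ⟨p - 2, by have := hp.two_le; omega⟩
  have hd : ∀ m ∈ Finset.range n, ∃ c : R,
      u ^ (m + 2) * h ^ (n + 2 - (m + 2)) * ((n + 2).choose (m + 2) : R) =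
        ((n + 2 : ℕ) : R) * (u ^ 2 * c) := by
    intro m hm
    have hm' := Finset.mem_range.1 hm
    obtain ⟨k, hk⟩ := hp.dvd_choose_self (k := m + 2) (by omega) (by omega)
    refine ⟨u ^ m * h ^ (n + 2 - (m + 2)) * k, ?_⟩
    rw [hk]; push_cast; ring
  choose! c hc using hd
  refine ⟨∑ m ∈ Finset.range n, c m, ?_⟩
  rw [add_pow, Finset.sum_range_succ, Finset.sum_range_succ', Finset.sum_range_succ']
  rw [Finset.sum_congr rfl hc, ← Finset.mul_sum, ← Finset.mul_sum]
  simp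
  ring

theorem aux_choose {p : ℕ} (hp : p.Prime) (k : ℕ) (hk : k < p) :
    (p : ℤ) ∣ ((p - 1).choose k : ℤ) - (-1) ^ k := by
  induction k with
  | zero => simp
  | succ k ih =>
    have h1 := ih (by omega)
    obtain ⟨n, rfl⟩ : ∃ n, p = n + 1 := ⟨p - 1, by omega⟩
    have h2 := hp.dvd_choose_self (k := k + 1) (by omega) hk
    rw [Nat.choose_succ_succ] at h2
    have h3 : ((n + 1 : ℕ) : ℤ) ∣ ((n.choose k + n.choose (k + 1) : ℕ) : ℤ) :=
      Int.natCast_dvd_natCast.2 h2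
    have := dvd_sub h3 h1
    have e : ((n + 1 - 1).choose (k + 1) : ℤ) - (-1) ^ (k + 1) =
      ((n.choose k + n.choose (k + 1) : ℕ) : ℤ) - (((n + 1 - 1).choose k : ℤ) - (-1) ^ k) := by
      simp only [Nat.add_sub_cancel]
      push_cast
      ring
    rw [e]
    exact this

theorem aux_geom {R : Type*} [CommRing R] {p : ℕ} (hp : p.Prime) (x y : R) :
    (p : R) ∣ (∑ i ∈ Finset.Icc 1 p, x ^ (p - i) * (-y) ^ (i - 1)) - (x + y) ^ (p - 1) := by
  obtain ⟨n, rfl⟩ : ∃ n, p = n + 1 := ⟨p - 1, by have := hp.two_le; omega⟩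
  have h1 : ∑ i ∈ Finset.Icc 1 (n + 1), x ^ (n + 1 - i) * (-y) ^ (i - 1)
      = ∑ i ∈ Finset.range (n + 1), x ^ (n - i) * (-y) ^ i := by
    refine (Finset.sum_nbij (fun i => i + 1) ?_ ?_ ?_ ?_).symm
    · intro i hi; simp at hi ⊢; omega
    · intro i _ j _ hij; simpa using hij
    · intro i hi; simp at hi ⊢; exact ⟨i - 1, by omega, by omega⟩
    · intro i hi
      congr 2
      omega
  simp only [Nat.add_sub_cancel]
  rw [h1, add_comm x y, add_pow, ← Finset.sum_sub_distrib]
  refine Finset.dvd_sum fun i hi => ?_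
  obtain ⟨k, hk⟩ := aux_choose hp i (Finset.mem_range.1 hi)
  have hk' : (((n + 1 - 1).choose i : ℤ) : R) = (-1) ^ i + ((n + 1 : ℕ) : ℤ) * k := by
    rw [sub_eq_iff_eq_add.1 hk]; push_cast; ring
  simp only [Nat.add_sub_cancel, Int.cast_natCast] at hk' ⊢
  rw [hk', neg_pow y i]
  exact ⟨-(x ^ (n - i) * y ^ i * k), by push_cast; ring⟩

theorem aux_pow {R : Type*} [CommRing R] (I : Ideal R) {x B : R} (hx : x ∈ I) (hB : B ∈ I ^ 2)
    (n : ℕ) : (x + B) ^ n - x ^ n ∈ I ^ (n + 1) := by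
  induction n with
  | zero => simp
  | succ n ih =>
    have h1 : (x + B) ^ (n + 1) - x ^ (n + 1) = (x + B) * ((x + B) ^ n - x ^ n) + B * x ^ n := by
      ring
    rw [h1]
    refine add_mem ?_ ?_
    · rw [pow_succ' I (n + 1)]
      exact Ideal.mul_mem_mul (add_mem hx (Ideal.pow_le_self (by norm_num) hB)) ih
    · have : n + 1 + 1 = 2 + n := by ring
      rw [this, pow_add]
      exact Ideal.mul_mem_mul hB (Ideal.pow_mem_pow hx n)

theorem aux_span_pow {R : Type*} [CommRing R] (u v : R) (n : ℕ) (J : Ideal R)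
    (h : ∀ i ≤ n, u ^ i * v ^ (n - i) ∈ J) : Ideal.span {u, v} ^ n ≤ J := by
  rw [Ideal.span_insert, ← Ideal.add_eq_sup, add_pow]
  rw [Ideal.sum_eq_sup, Finset.sup_le_iff]
  intro i hi
  refine le_trans (b := Ideal.span {u} ^ i * Ideal.span {v} ^ (n - i)) ?_ ?_
  · exact Ideal.mul_le_left
  rw [Ideal.span_singleton_pow, Ideal.span_singleton_pow, Ideal.span_singleton_mul_span_singleton,
    Ideal.span_singleton_le_iff_mem]
  exact h i (by simpa [Nat.lt_succ_iff] using hi)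

theorem aux_div {F : Type*} [Field F] {q x c r : F} (hq : q ≠ 0) {m : ℕ}
    (h : x ^ (m + 1) = q ^ m * (c * x) + q ^ (m + 1) * r) :
    (x / q) ^ (m + 1) = c * (x / q) + r := by
  rw [div_pow, h]
  field_simp
  ring

/-- integrality lemma -/
theorem aux_int {B : Type*} [CommRing B] [IsDomain B] [IsIntegrallyClosed B] {q x c r : B}
    (hq : q ≠ 0) {n : ℕ} (hn : 2 ≤ n) (h : x ^ n = q ^ (n - 1) * (c * x) + q ^ n * r) : q ∣ x := by
  let F := FractionRing B
  have hq' : algebraMap B F q ≠ 0 := by simpa using hq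
  let z : F := algebraMap B F x / algebraMap B F q
  have hz : z ^ n = algebraMap B F c * z + algebraMap B F r := by
    have h' := congrArg (algebraMap B F) h
    simp only [map_pow, map_add, map_mul] at h'
    simp only [z]
    obtain ⟨m, rfl⟩ : ∃ m, n = m + 1 := ⟨n - 1, by omega⟩
    simp only [Nat.add_sub_cancel] at h'
    exact aux_div hq' h'
  have hint : IsIntegral B z := by
    refine ⟨Polynomial.X ^ n - (Polynomial.C c * Polynomial.X + Polynomial.C r), ?_, ?_⟩
    · apply Polynomial.monic_X_pow_sub
      exact lt_of_le_of_lt (Polynomial.degree_linear_le) (by exact_mod_cast hn)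
    · simp [hz]
  obtain ⟨w, hw⟩ := IsIntegrallyClosed.isIntegral_iff.1 hint
  refine ⟨w, ?_⟩
  apply IsFractionRing.injective B F
  rw [map_mul, hw]
  simp only [z]
  rw [mul_div_cancel₀ _ hq']

theorem aux_Ip {R : Type*} [CommRing R] [IsDomain R] [IsIntegrallyClosed R] {p : ℕ} (hp : p.Prime)
    {u v u' v' : R} (hu : u ^ p = p * u') (hv : v ^ p = p * v') :
    Ideal.span {u, v} ^ p ≤ Ideal.span {(p : R)} := by
  refine aux_span_pow u v p _ fun i hi => ?_
  rw [Ideal.mem_span_singleton, ← IsIntegrallyClosed.pow_dvd_pow_iff hp.ne_zero]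
  refine ⟨u' ^ i * v' ^ (p - i), ?_⟩
  rw [mul_pow, ← pow_mul, ← pow_mul, mul_comm i, mul_comm (p - i), pow_mul, pow_mul, hu, hv,
    mul_pow, mul_pow]
  have : (p : R) ^ p = (p : R) ^ i * (p : R) ^ (p - i) := by rw [← pow_add]; congr 1; omega
  rw [this]; ring

/-- shape of u ^ p -/
theorem aux_up {R : Type*} [CommRing R] {p : ℕ} (hp : p.Prime)
    {u h a : R} (hu : (u + h) ^ p = h ^ p + a * p) :
    ∃ q, u ^ p = p * (a - h ^ (p - 1) * u - u ^ 2 * q) := by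
  obtain ⟨q, hq⟩ := aux_quad hp u h
  exact ⟨q, by linear_combination hu - hq⟩

theorem aux_Z {R : Type*} [CommRing R] [IsDomain R] [IsIntegrallyClosed R] {p : ℕ} (hp : p.Prime)
    (hp3 : 3 ≤ p) (hp0 : (p : R) ≠ 0) {u v h₁ h₂ a b d : R}
    (hu : (u + h₁) ^ p = h₁ ^ p + a * p) (hv : (v + h₂) ^ p = h₂ ^ p + b * p)
    (hd : a * h₂ ^ p + b * h₁ ^ p = p * d) :
    (p : R) ∣ (h₁ * v + h₂ * u) ^ (p - 1) := by
  obtain ⟨q, hq⟩ := aux_up hp hu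
  obtain ⟨q', hq'⟩ := aux_up hp hv
  have hI := aux_Ip hp hq hq'
  set I := Ideal.span {u, v} with hIdef
  have huI : u ∈ I := Ideal.subset_span (by simp)
  have hvI : v ∈ I := Ideal.subset_span (by simp)
  obtain ⟨r, hr⟩ := exists_add_pow_prime_eq hp (h₁ * v) (h₂ * u)
  set X := h₁ * v + h₂ * u with hX
  have hXI : X ∈ I := add_mem (I.mul_mem_left _ hvI) (I.mul_mem_left _ huI)
  have h2 : ∀ x ∈ I, ∀ y ∈ I, ∀ c, x * y * c ∈ I ^ 2 := fun x hx y hy c =>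
    Ideal.mul_mem_right _ _ (by rw [pow_two]; exact Ideal.mul_mem_mul hx hy)
  obtain ⟨B, hB, hXB⟩ : ∃ B ∈ I ^ 2, X ^ p = p * ((-(h₁ * h₂) ^ (p - 1) * X + B) + p * d) := by
    refine ⟨v * u * (h₁ * h₂ * r) - v * v * (h₁ ^ p * q') - u * u * (h₂ ^ p * q), ?_, ?_⟩
    · exact sub_mem (sub_mem (h2 _ hvI _ huI _) (h2 _ hvI _ hvI _)) (h2 _ huI _ huI _)
    · rw [hr, mul_pow, mul_pow, hq, hq', ← hd, hX, mul_pow]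
      obtain ⟨m, rfl⟩ : ∃ m, p = m + 1 := ⟨p - 1, by omega⟩
      simp only [Nat.add_sub_cancel]
      ring
  have h3 : (p : R) ∣ ((-(h₁ * h₂) ^ (p - 1) * X + B) + p * d) ^ (p - 1)
      - (-(h₁ * h₂) ^ (p - 1) * X) ^ (p - 1) := by
    have e1 := sub_dvd_pow_sub_pow ((-(h₁ * h₂) ^ (p - 1) * X + B) + p * d)
      (-(h₁ * h₂) ^ (p - 1) * X + B) (p - 1)
    rw [add_sub_cancel_left] at e1
    have e2 := aux_pow I (I.mul_mem_left (-(h₁ * h₂) ^ (p - 1)) hXI) hB (p - 1)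
    rw [Nat.sub_add_cancel (by omega)] at e2
    have e3 := Ideal.mem_span_singleton.1 (hI e2)
    have := dvd_add ((dvd_mul_right _ _).trans e1) e3
    simpa using this
  obtain ⟨k, hk⟩ := h3
  refine aux_int hp0 (n := p) (c := (-(h₁ * h₂) ^ (p - 1)) ^ (p - 1)) (r := k) (by omega) ?_
  rw [← pow_mul, mul_comm, pow_mul, hXB, mul_pow, sub_eq_iff_eq_add.1 hk]
  have : (p : R) ^ p = (p : R) ^ (p - 1) * p := by rw [← pow_succ]; congr 1; omega
  rw [this, mul_pow (-(h₁ * h₂) ^ (p - 1)) X]; ring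

theorem aux_suff {R : Type*} [CommRing R] [IsDomain R] [IsIntegrallyClosed R] {p : ℕ}
    (hp : p.Prime)
    (hp3 : 3 ≤ p) (hp0 : (p : R) ≠ 0) {u v h₁ h₂ a b d : R}
    (hu : (u + h₁) ^ p = h₁ ^ p + a * p) (hv : (v + h₂) ^ p = h₂ ^ p + b * p)
    (hd : a * h₂ ^ p + b * h₁ ^ p = p * d) (c : ℕ → R)
    (hc : ∀ i, 2 ≤ i → i ≤ p → c (i - 1) * h₂ + c i * h₁ ∈ Ideal.span {(p : R), u, v}) :
    (p : R) ∣ h₁ ^ (p - 1) * ∑ i ∈ Finset.Icc 1 p, c i * v ^ (p - i) * u ^ (i - 1) := by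
  have hZ := aux_Z hp hp3 hp0 hu hv hd
  obtain ⟨q, hq⟩ := aux_up hp hu
  obtain ⟨q', hq'⟩ := aux_up hp hv
  have hI := aux_Ip hp hq hq'
  have hG := aux_geom hp (h₁ * v) (h₂ * u)
  set I := Ideal.span {u, v} with hIdef
  set P := Ideal.span {(p : R), u, v} with hP
  have huI : u ∈ I := Ideal.subset_span (by simp)
  have hvI : v ∈ I := Ideal.subset_span (by simp)
  have hPI : ∀ x ∈ P, ∀ y ∈ I ^ (p - 1), (p : R) ∣ x * y := by
    intro x hx y hy
    rw [hP, Ideal.mem_span_insert] at hx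
    obtain ⟨z, w, hw, rfl⟩ := hx
    rw [add_mul]
    refine dvd_add ⟨z * y, by ring⟩ ?_
    rw [← Ideal.mem_span_singleton]
    apply hI
    have : p = 1 + (p - 1) := by omega
    rw [this, pow_add, pow_one]
    exact Ideal.mul_mem_mul hw hy
  have key : ∀ i, 1 ≤ i → i ≤ p → h₁ ^ (i - 1) * c i - (-h₂) ^ (i - 1) * c 1 ∈ P := by
    intro i hi
    induction i, hi using Nat.le_induction with
    | base => intro _; simp
    | succ n hn ih =>
      intro hnp
      have e1 := ih (by omega)
      have e2 := hc (n + 1) (by omega) hnp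
      obtain ⟨m, rfl⟩ : ∃ m, n = m + 1 := ⟨n - 1, by omega⟩
      simp only [Nat.add_sub_cancel] at e1 e2 ⊢
      have := add_mem (P.mul_mem_left (-h₂) e1) (P.mul_mem_left (h₁ ^ m) e2)
      convert this using 1
      ring
  have main : (p : R) ∣ h₁ ^ (p - 1) * (∑ i ∈ Finset.Icc 1 p, c i * v ^ (p - i) * u ^ (i - 1))
      - c 1 * ∑ i ∈ Finset.Icc 1 p, (h₁ * v) ^ (p - i) * (-(h₂ * u)) ^ (i - 1) := by
    rw [Finset.mul_sum, Finset.mul_sum, ← Finset.sum_sub_distrib]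
    refine Finset.dvd_sum fun i hi => ?_
    rw [Finset.mem_Icc] at hi
    have e1 := key i hi.1 hi.2
    have e2 : v ^ (p - i) * u ^ (i - 1) ∈ I ^ (p - 1) := by
      have : p - 1 = (p - i) + (i - 1) := by omega
      rw [this, pow_add]
      exact Ideal.mul_mem_mul (Ideal.pow_mem_pow hvI _) (Ideal.pow_mem_pow huI _)
    have e3 := hPI _ e1 _ e2
    have e4 : h₁ ^ (p - 1) = h₁ ^ (p - i) * h₁ ^ (i - 1) := by
      rw [← pow_add]; congr 1; omega
    have := e3.mul_left (h₁ ^ (p - i))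
    convert this using 1
    rw [e4, mul_pow, neg_mul_eq_neg_mul, mul_pow]
    ring
  have h5 := dvd_add main ((dvd_add hG hZ).mul_left (c 1))
  convert h5 using 1
  ring

/-- descent -/
theorem aux_desc {S K : Type*} [CommRing S] [IsDomain S] [IsIntegrallyClosed S] [Field K]
    [Algebra S K] [FaithfulSMul S K] {q h : S} (hq : Prime q) (hh : ¬ q ∣ h) {w : K}
    (h1 : IsIntegral S (q • w)) (h2 : IsIntegral S (h • w)) : IsIntegral S w := by
  have hh0 : h ≠ 0 := by rintro rfl; simp at hh
  have e1 := IsIntegrallyClosed.minpoly_smul hh0 h1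
  have e2 := IsIntegrallyClosed.minpoly_smul hq.ne_zero h2
  rw [smul_comm, e2] at e1
  set Q1 := minpoly S (q • w) with hQ1
  set Q2 := minpoly S (h • w) with hQ2
  have hn : Q1.natDegree = Q2.natDegree := by
    have := congrArg Polynomial.natDegree e1
    simpa using this.symm
  have hdiv : ∀ i, ∃ c, Q1.coeff i = c * q ^ (Q1.natDegree - i) := by
    intro i
    have := congrArg (fun P => Polynomial.coeff P i) e1
    simp only [Polynomial.coeff_scaleRoots] at this
    have hd : q ^ (Q1.natDegree - i) ∣ Q1.coeff i * h ^ (Q1.natDegree - i) :=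
      ⟨Q2.coeff i, by rw [← this, hn]; ring⟩
    have := hq.pow_dvd_of_dvd_mul_right _ (fun hx => hh (hq.dvd_of_dvd_pow hx)) hd
    obtain ⟨c, hc⟩ := this
    exact ⟨c, by rw [hc]; ring⟩
  choose c hc using hdiv
  have hmon : Q1.Monic := minpoly.monic h1
  have hq0 : algebraMap S K q ≠ 0 := by
    simpa using hq.ne_zero
  have hz := minpoly.aeval S (q • w)
  rw [← hQ1, Polynomial.aeval_eq_sum_range] at hz
  have hcn : c Q1.natDegree = 1 := by
    have := hc Q1.natDegree
    simpa [hmon.coeff_natDegree] using this.symm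
  have hz2 : ∑ i ∈ Finset.range (Q1.natDegree + 1), c i • w ^ i = 0 := by
    have : ∑ i ∈ Finset.range (Q1.natDegree + 1), Q1.coeff i • (q • w) ^ i =
        (algebraMap S K q) ^ Q1.natDegree *
          ∑ i ∈ Finset.range (Q1.natDegree + 1), c i • w ^ i := by
      rw [Finset.mul_sum]
      refine Finset.sum_congr rfl fun i hi => ?_
      have hi' : i ≤ Q1.natDegree := by simpa [Nat.lt_succ_iff] using hi
      rw [hc i]
      simp only [Algebra.smul_def, map_mul, map_pow, mul_pow]
      have : algebraMap S K q ^ Q1.natDegree =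
        algebraMap S K q ^ (Q1.natDegree - i) * algebraMap S K q ^ i := by
        rw [← pow_add]; congr 1; omega
      rw [this]; ring
    rw [this] at hz
    exact (mul_eq_zero.1 hz).resolve_left (pow_ne_zero _ hq0)
  rw [Finset.sum_range_succ, hcn, one_smul] at hz2
  refine ⟨Polynomial.X ^ Q1.natDegree +
    ∑ i ∈ Finset.range Q1.natDegree, Polynomial.C (c i) * Polynomial.X ^ i, ?_, ?_⟩
  · apply Polynomial.monic_X_pow_add
    refine (Polynomial.degree_sum_le _ _).trans_lt ?_
    rw [Finset.sup_lt_iff (WithBot.bot_lt_coe _)]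
    intro i hi
    refine (Polynomial.degree_C_mul_X_pow_le _ _).trans_lt ?_
    exact_mod_cast Finset.mem_range.1 hi
  · simp [Polynomial.eval₂_finsetSum, ← Algebra.smul_def]
    rw [add_comm]; exact hz2

theorem aux_ua {R : Type*} [CommRing R] [IsDomain R] [IsIntegrallyClosed R] {p : ℕ} (hp : p.Prime)
    (hp0 : (p : R) ≠ 0) {u h a : R}
    (hu : (u + h) ^ p = h ^ p + (p * a) * p) : (p : R) ∣ u ^ (p - 1) := by
  obtain ⟨q, hq⟩ := aux_up hp hu
  have hp2 := hp.two_le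
  have h3 : (p : R) ∣ (p * a + (-(h ^ (p - 1) + u * q) * u)) ^ (p - 1)
      - (-(h ^ (p - 1) + u * q) * u) ^ (p - 1) := by
    have e1 := sub_dvd_pow_sub_pow (p * a + (-(h ^ (p - 1) + u * q) * u))
      (-(h ^ (p - 1) + u * q) * u) (p - 1)
    rw [add_sub_cancel_right] at e1
    exact (dvd_mul_right _ _).trans e1
  obtain ⟨k, hk⟩ := h3
  refine aux_int hp0 (n := p) (c := (-(h ^ (p - 1) + u * q)) ^ (p - 1)) (r := k) (by omega) ?_
  have e : p * a - h ^ (p - 1) * u - u ^ 2 * q = p * a + (-(h ^ (p - 1) + u * q) * u) := by ring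
  rw [← pow_mul, mul_comm, pow_mul, hq, e, mul_pow, sub_eq_iff_eq_add.1 hk]
  have : (p : R) ^ p = (p : R) ^ (p - 1) * p := by rw [← pow_succ]; congr 1; omega
  rw [this, mul_pow (-(h ^ (p - 1) + u * q)) u]; ring

theorem aux_nd {S L K : Type*} [CommRing S] [IsDomain S] [IsIntegrallyClosed S] [Field L]
    [Algebra S L] [IsFractionRing S L] [Field K] [Algebra L K] [Algebra S K] [IsScalarTower S L K]
    {p : ℕ} (hp : p.Prime) (hpS : Prime (p : S)) {f h : S} {ω : K}
    (hω : ω ^ p = algebraMap S K f) (hdeg : (minpoly L ω).natDegree = p)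
    (hd : ∃ z ∈ Algebra.adjoin S {ω}, (ω - algebraMap S K h) ^ (p - 1) = (p : K) * z) : False := by
  open Polynomial in
  obtain ⟨z, hz, hzz⟩ := hd
  have hinj : Function.Injective (algebraMap S K) := by
    rw [IsScalarTower.algebraMap_eq S L K]
    exact (algebraMap L K).injective.comp (IsFractionRing.injective S L)
  have : FaithfulSMul S K := (faithfulSMul_iff_algebraMap_injective S K).2 hinj
  have hint : IsIntegral S ω := ⟨X ^ p - C f, monic_X_pow_sub_C _ hp.ne_zero, by simp [hω]⟩
  rw [Algebra.adjoin_singleton_eq_range_aeval] at hz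
  obtain ⟨q, rfl⟩ := hz
  have hmS : (minpoly S ω).natDegree = p := by
    rw [← hdeg, minpoly.isIntegrallyClosed_eq_field_fractions' L hint,
      (minpoly.monic hint).natDegree_map]
  have hdvd : minpoly S ω ∣ (X - C h) ^ (p - 1) - C (p : S) * q := by
    apply minpoly.isIntegrallyClosed_dvd hint
    simp [hzz]
  let π := Ideal.Quotient.mk (Ideal.span {(p : S)})
  have : (Ideal.span {(p : S)}).IsPrime := (Ideal.span_singleton_prime hpS.ne_zero).2 hpS
  have h2 := Polynomial.map_dvd π hdvd
  have hπ : π (p : S) = 0 := Ideal.Quotient.eq_zero_iff_mem.2 (Ideal.mem_span_singleton_self _)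
  rw [Polynomial.map_sub, Polynomial.map_mul, Polynomial.map_C, hπ, C_0, zero_mul, sub_zero,
    Polynomial.map_pow, Polynomial.map_sub, Polynomial.map_X, Polynomial.map_C] at h2
  have h3 := Polynomial.natDegree_le_of_dvd h2 (pow_ne_zero _ (X_sub_C_ne_zero _))
  rw [(minpoly.monic hint).natDegree_map, hmS, natDegree_pow, natDegree_X_sub_C] at h3
  have := hp.two_le
  omega

theorem aux_height {S : Type*} [CommRing S] [IsDomain S] [IsNoetherianRing S] {q : S}
    (hq : Prime q) (hP : (Ideal.span {q}).IsPrime) :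
    Order.height (⟨Ideal.span {q}, hP⟩ : PrimeSpectrum S) = 1 := by
  rw [← PrimeSpectrum.height_eq_orderHeight]
  apply le_antisymm
  · apply Ideal.height_le_one_of_isPrincipal_of_mem_minimalPrimes (Ideal.span {q})
    rw [Ideal.minimalPrimes_eq_subsingleton_self]; rfl
  · rw [Order.one_le_iff_ne_zero]
    intro h0
    rw [Ideal.height_eq_zero_iff_eq_bot] at h0
    exact hq.ne_zero (by simpa using h0)

theorem aux_sqf {S : Type*} [CommRing S] [IsDomain S] [IsNoetherianRing S] {q f : S}
    (hq : Prime q) (hf : PaperSquarefree f) : ¬ q ^ 2 ∣ f := by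
  rintro ⟨k, rfl⟩
  have hP : (Ideal.span {q}).IsPrime := (Ideal.span_singleton_prime hq.ne_zero).2 hq
  have := hf _ hP (aux_height hq hP) (Ideal.mem_span_singleton.2 ⟨q * k, by ring⟩)
  rw [Ideal.map_span, Set.image_singleton] at this
  obtain ⟨c, hc⟩ := Ideal.mem_span_singleton.1 (this ▸ Ideal.mem_span_singleton_self _)
  set φ := algebraMap S (Localization.AtPrime (Ideal.span {q})) with hφ
  have hinj : Function.Injective φ :=
    IsLocalization.injective _ (Ideal.primeCompl_le_nonZeroDivisors (Ideal.span {q}))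
  have h0 : φ q ≠ 0 := by
    rw [Ne, map_eq_zero_iff _ hinj]; exact hq.ne_zero
  have h1 : φ q * (φ (k) * c) = 1 := by
    apply mul_left_cancel₀ h0
    rw [map_mul, map_pow] at hc
    linear_combination -hc
  have h2 : IsUnit (φ q) := IsUnit.of_mul_eq_one _ h1
  rw [IsLocalization.AtPrime.isUnit_to_map_iff _ (Ideal.span {q})] at h2
  exact h2 (Ideal.mem_span_singleton_self _)

theorem aux_h {S : Type*} [CommRing S] [IsDomain S] [IsNoetherianRing S] {p : ℕ} (hp : p.Prime)
    (hpS : Prime (p : S)) {f g h₁ a : S} (hf : f = h₁ ^ p + a * p)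
    (hfg : (¬IsUnit f ∧ ¬IsUnit g ∧ PaperSquarefree f ∧ PaperSquarefree g ∧ SatisfiesA1 f g) ∨
      (IsUnit f ∧ IsUnit g ∧ (∀ x : S, x ^ p ≠ f) ∧ (∀ x : S, x ^ p ≠ g)))
    (hfg1 : ∃ x y : S, f * g = x ^ p + y * (p : S) ^ 2) : ¬ (p : S) ∣ h₁ := by
  intro hd
  have hpf : (p : S) ∣ f := by
    rw [hf]
    exact dvd_add (dvd_pow hd hp.ne_zero) (dvd_mul_left _ _)
  rcases hfg with ⟨_, _, hsf, _, hA⟩ | ⟨hu, _⟩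
  swap
  · exact hpS.not_isUnit (isUnit_of_dvd_unit hpf hu)
  have hP : (Ideal.span {(p : S)}).IsPrime := (Ideal.span_singleton_prime hpS.ne_zero).2 hpS
  apply hA (Ideal.span {(p : S)}) ⟨hP, aux_height hpS hP⟩
  refine ⟨Ideal.mem_span_singleton.2 hpf, Ideal.mem_span_singleton.2 ?_⟩
  obtain ⟨x, y, hxy⟩ := hfg1
  have hx : (p : S) ∣ x := by
    apply hpS.dvd_of_dvd_pow (n := p)
    rw [← sub_eq_iff_eq_add] at hxy
    rw [← hxy]
    exact dvd_sub (hpf.mul_right _) ⟨y * p, by ring⟩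
  have h2 : (p : S) ^ 2 ∣ f * g := by
    rw [hxy]
    exact dvd_add ((pow_dvd_pow_of_dvd hx 2).trans (pow_dvd_pow _ hp.two_le)) (dvd_mul_left _ _)
  by_contra hg
  exact aux_sqf hpS hsf (hpS.pow_dvd_of_dvd_mul_right 2 hg h2)

theorem aux_d {S : Type*} [CommRing S] [IsDomain S] {p : ℕ} (hp : p.Prime)
    (hpS : Prime (p : S)) {f g h₁ h₂ a b : S} (hf : f = h₁ ^ p + a * p) (hg : g = h₂ ^ p + b * p)
    (hfg1 : ∃ x y : S, f * g = x ^ p + y * (p : S) ^ 2) :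
    ∃ d, a * h₂ ^ p + b * h₁ ^ p = p * d := by
  obtain ⟨x, y, hxy⟩ := hfg1
  have h1 : (p : S) ∣ x - h₁ * h₂ := by
    apply hpS.dvd_of_dvd_pow (n := p)
    obtain ⟨r, hr⟩ := exists_add_pow_prime_eq hp (x - h₁ * h₂) (h₁ * h₂)
    rw [sub_add_cancel] at hr
    refine ⟨a * h₂ ^ p + b * h₁ ^ p + p * a * b - y * p - (x - h₁ * h₂) * (h₁ * h₂) * r, ?_⟩
    rw [hf, hg] at hxy
    rw [mul_pow h₁ h₂] at hr
    linear_combination -hr - hxy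
  have h2 := dvd_sub_pow_of_dvd_sub h1 1
  obtain ⟨k, hk⟩ := h2
  rw [hf, hg] at hxy
  refine ⟨k + y - a * b, ?_⟩
  apply mul_left_cancel₀ hpS.ne_zero
  simp only [pow_one, mul_pow] at hk
  linear_combination hk + hxy

open Polynomial in
theorem aux_coeff {S O : Type*} [CommRing S] [CommRing O] [IsDomain O] [IsLocalRing O] (φ : S →+* O)
    {s : O} (hs : s ∈ IsLocalRing.maximalIdeal O) (hs0 : s ≠ 0) (N : ℕ)
    (hφ : ∀ r, φ r ∈ IsLocalRing.maximalIdeal O → s ^ N ∣ φ r) (n : ℕ) (hn : n ≤ N) (G : S[X])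
    (hG : s ^ n ∣ G.eval₂ φ s) (k : ℕ) (hk : k < n) :
    φ (G.coeff k) ∈ IsLocalRing.maximalIdeal O := by
  induction n generalizing G k with
  | zero => omega
  | succ n ih =>
    rw [← divX_mul_X_add G, eval₂_add, eval₂_mul, eval₂_X, eval₂_C] at hG
    have h1 : s ∣ φ (G.coeff 0) := by
      have := (dvd_pow_self s n.succ_ne_zero).trans hG
      exact (dvd_add_right (dvd_mul_left _ _)).1 this
    have h0 : φ (G.coeff 0) ∈ IsLocalRing.maximalIdeal O := Ideal.mem_of_dvd _ h1 hs
    have h2 : s ^ (n + 1) ∣ φ (G.coeff 0) := (pow_dvd_pow s hn).trans (hφ _ h0)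
    have h3 := (dvd_add_left h2).1 hG
    rw [pow_succ] at h3
    have h4 := (mul_dvd_mul_iff_right hs0).1 h3
    cases k with
    | zero => exact h0
    | succ k =>
      have := ih (by omega) G.divX h4 k (by omega)
      rwa [coeff_divX] at this

open Polynomial in
theorem aux_modp {S : Type*} [CommRing S] {p : ℕ} (hp : p.Prime) (hpS : Prime (p : S))
    {h₁ h₂ : S} (hh₁ : ¬ (p : S) ∣ h₁) (r : ℕ → S)
    (H : ∀ k < p - 1, (p : S) ∣ ((∑ i ∈ Finset.Icc 1 p,
      C (r i * h₁ ^ (i - 1)) * (X - C h₂) ^ (p - i)).coeff k)) (i : ℕ) (hi2 : 2 ≤ i) (hip : i ≤ p) :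
    (p : S) ∣ r (i - 1) * h₂ + r i * h₁ := by
  have hp2 := hp.two_le
  let π := Ideal.Quotient.mk (Ideal.span {(p : S)})
  have hπ : ∀ x, π x = 0 ↔ (p : S) ∣ x := fun x => by
    rw [Ideal.Quotient.eq_zero_iff_mem, Ideal.mem_span_singleton]
  have : (Ideal.span {(p : S)}).IsPrime := (Ideal.span_singleton_prime hpS.ne_zero).2 hpS
  have : Fact p.Prime := ⟨hp⟩
  have : CharP (S ⧸ Ideal.span {(p : S)}) p := by
    exact CharP.quotient S p hpS.not_isUnit
  set G := (∑ i ∈ Finset.Icc 1 p, C (r i * h₁ ^ (i - 1)) * (X - C h₂) ^ (p - i)) with hG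
  obtain ⟨c, hc⟩ : ∃ c, G.map π = C c * X ^ (p - 1) := by
    refine ⟨(G.map π).coeff (p - 1), ?_⟩
    ext k
    rw [coeff_C_mul_X_pow]
    split_ifs with h
    · rw [h]
    · rcases lt_or_gt_of_ne h with h | h
      · rw [coeff_map, hπ]; exact H k h
      · apply coeff_eq_zero_of_natDegree_lt
        refine lt_of_le_of_lt (natDegree_map_le.trans ?_) h
        refine natDegree_sum_le_of_forall_le _ _ fun i hi => ?_
        refine (natDegree_C_mul_le _ _).trans ?_
        refine natDegree_pow_le.trans ?_
        rw [Finset.mem_Icc] at hi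
        have := natDegree_X_sub_C_le h₂
        calc (p - i) * (X - C h₂).natDegree ≤ (p - i) * 1 := Nat.mul_le_mul_left _ this
          _ ≤ p - 1 := by omega
  have h1 := congrArg (fun P => (X + C (π h₂)) * P.comp (X + C (π h₂))) hc
  simp only [mul_comp, C_comp, pow_comp, X_comp] at h1
  have h2 : (X + C (π h₂)) * (C c * (X + C (π h₂)) ^ (p - 1)) = C c * X ^ p + C (c * π h₂ ^ p) := by
    have : (X + C (π h₂)) * (C c * (X + C (π h₂)) ^ (p - 1)) = C c * (X + C (π h₂)) ^ p := by
      rw [mul_left_comm, ← pow_succ', Nat.sub_add_cancel (by omega)]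
    rw [this, add_pow_char, C_mul, C_pow]; ring
  have h3 : (G.map π).comp (X + C (π h₂)) =
      ∑ i ∈ Finset.Icc 1 p, C (π (r i * h₁ ^ (i - 1))) * X ^ (p - i) := by
    rw [hG, Polynomial.map_sum, Polynomial.sum_comp]
    refine Finset.sum_congr rfl fun i _ => ?_
    simp
  have h4 : ∀ j, 1 ≤ j → j ≤ p → ((G.map π).comp (X + C (π h₂))).coeff (p - j) =
      π (r j * h₁ ^ (j - 1)) := by
    intro j hj1 hjp
    rw [h3, finsetSum_coeff]
    simp only [coeff_C_mul_X_pow]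
    rw [Finset.sum_eq_single j]
    · simp
    · intro k hk hkj
      rw [Finset.mem_Icc] at hk
      rw [if_neg (by omega)]
    · intro h; exact absurd (Finset.mem_Icc.2 ⟨hj1, hjp⟩) h
  rw [h2] at h1
  have h5 := congrArg (fun P => P.coeff (p - i + 1)) h1
  simp only [add_mul, coeff_add, coeff_X_mul, coeff_C_mul, coeff_X_pow, coeff_C_succ] at h5
  rw [h4 i (by omega) hip, if_neg (by omega)] at h5
  have e : p - i + 1 = p - (i - 1) := by omega
  rw [e, h4 (i - 1) (by omega) (by omega), ← map_mul, ← map_add, mul_zero, add_zero, hπ] at h5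
  have e2 : r i * h₁ ^ (i - 1) + h₂ * (r (i - 1) * h₁ ^ (i - 1 - 1)) =
      h₁ ^ (i - 2) * (r (i - 1) * h₂ + r i * h₁) := by
    obtain ⟨m, rfl⟩ : ∃ m, i = m + 2 := ⟨i - 2, by omega⟩
    simp only [Nat.add_sub_cancel, show m + 2 - 1 = m + 1 by omega]; ring
  rw [e2] at h5
  exact (hpS.dvd_or_dvd h5).resolve_left fun h => hh₁ (hpS.dvd_of_dvd_pow h)

theorem aux_mem {S F : Type*} [CommRing S] [Field F] [Algebra S F] (O : ValuationSubring F)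
    (h : ∀ s, algebraMap S F s ∈ O) {x : F} (hx : IsIntegral S x) : x ∈ O := by
  obtain ⟨P, hP, hPx⟩ := hx
  let φ : S →+* O := (algebraMap S F).codRestrict O.toSubring h
  have h2 : IsIntegral O x := by
    refine ⟨P.map φ, hP.map _, ?_⟩
    rw [Polynomial.eval₂_map]
    exact hPx
  obtain ⟨y, rfl⟩ := IsIntegrallyClosed.isIntegral_iff.1 h2
  exact y.2

theorem aux_trace {E K : Type*} [Field E] [Field K] [Algebra E K] {p : ℕ} {μ : K} {g : E}
    (hint : IsIntegral E μ) (htop : Algebra.adjoin E {μ} = ⊤)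
    (hdeg : (minpoly E μ).natDegree = p) (hμ : μ ^ p = algebraMap E K g) (m : ℕ) (hm : 0 < m)
    (hmp : m < p) : Algebra.trace E K (μ ^ m) = 0 := by
  let pb := PowerBasis.ofAdjoinEqTop hint htop
  have hdim : pb.dim = p := by
    simp [pb, hdeg]
  have hgen : pb.gen = μ := by simp [pb]
  rw [Algebra.trace_eq_matrix_trace pb.basis, Matrix.trace]
  refine Finset.sum_eq_zero fun i _ => ?_
  rw [Matrix.diag_apply, Algebra.leftMulMatrix_eq_repr_mul, pb.basis_eq_pow, hgen, ← pow_add]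
  have hi := i.2
  by_cases h : m + i < p
  · have : μ ^ (m + i) = pb.basis ⟨m + i, by omega⟩ := by rw [pb.basis_eq_pow, hgen]
    rw [this, Module.Basis.repr_self, Finsupp.single_apply, if_neg]
    intro h'
    have := congrArg Fin.val h'
    simp at this
    omega
  · have : μ ^ (m + i) = g • pb.basis ⟨m + i - p, by omega⟩ := by
      rw [pb.basis_eq_pow, hgen, Algebra.smul_def, ← hμ, ← pow_add]
      congr 1
      simp only
      omega
    rw [this, map_smul, Module.Basis.repr_self, Finsupp.smul_apply, Finsupp.single_apply, if_neg]
    · simp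
    · intro h'
      have := congrArg Fin.val h'
      simp at this
      omega

theorem aux_trace2 {E K : Type*} [Field E] [Field K] [Algebra E K] {p : ℕ} (hp : p.Prime) {μ : K}
    {g : E} (hint : IsIntegral E μ) (htop : Algebra.adjoin E {μ} = ⊤)
    (hdeg : (minpoly E μ).natDegree = p) (hμ : μ ^ p = algebraMap E K g)
    (hfin : Module.finrank E K = p) (θ h : E) :
    Algebra.trace E K ((algebraMap E K h * μ + algebraMap E K θ) ^ (p - 1)) = p * θ ^ (p - 1) := by
  have hp2 := hp.two_le
  rw [add_pow, map_sum, Finset.sum_eq_single 0]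
  · rw [pow_zero, one_mul, Nat.choose_zero_right, Nat.cast_one, mul_one, ← map_pow,
      Algebra.trace_algebraMap, hfin]
    simp
  · intro m hm hm0
    have hm' := Finset.mem_range.1 hm
    have : (algebraMap E K h * μ) ^ m * algebraMap E K θ ^ (p - 1 - m) * ((p - 1).choose m : K) =
        (h ^ m * θ ^ (p - 1 - m) * ((p - 1).choose m : E)) • μ ^ m := by
      rw [Algebra.smul_def]; simp; ring
    rw [this, map_smul, aux_trace hint htop hdeg hμ m (by omega) (by omega), smul_zero]
  · simp

theorem aux_deg0 {E K : Type*} [Field E] [Field K] [Algebra E K] {p : ℕ} (hp : p.Prime)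
    {μ : K} {g : E} (hμ : μ ^ p = algebraMap E K g) : (minpoly E μ).natDegree ≤ p := by
  have := Polynomial.natDegree_le_of_dvd (minpoly.dvd E μ (p := Polynomial.X ^ p - Polynomial.C g)
    (by simp [hμ])) (Polynomial.X_pow_sub_C_ne_zero hp.pos _)
  rwa [Polynomial.natDegree_X_pow_sub_C] at this

theorem aux_top {L E K : Type*} [Field L] [Field E] [Field K] [Algebra L E] [Algebra E K]
    [Algebra L K] [IsScalarTower L E K] {ω μ : K} (hω : ∃ w : E, algebraMap E K w = ω) {x : K}
    (hx : x ∈ Algebra.adjoin L ({ω, μ} : Set K)) : x ∈ Algebra.adjoin E ({μ} : Set K) := by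
  have : Algebra.adjoin L ({ω, μ} : Set K) ≤
      (Algebra.adjoin E ({μ} : Set K)).restrictScalars L := by
    rw [Algebra.adjoin_le_iff]
    rintro y (rfl | rfl)
    · obtain ⟨w, rfl⟩ := hω
      exact (Algebra.adjoin E ({μ} : Set K)).algebraMap_mem w
    · exact (Algebra.self_mem_adjoin_singleton E y :)
  exact this hx

open IntermediateField in
theorem aux_deg {L K : Type*} [Field L] [Field K] [Algebra L K] {p : ℕ} (hp : p.Prime)
    {ω μ : K} {f g : L} (hω : ω ^ p = algebraMap L K f) (hμ : μ ^ p = algebraMap L K g)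
    (hKgen : Algebra.adjoin L ({ω, μ} : Set K) = ⊤) (hdeg : Module.finrank L K = p ^ 2) :
    (minpoly L ω).natDegree = p ∧ Algebra.adjoin L⟮ω⟯ {μ} = ⊤ ∧
      (minpoly L⟮ω⟯ μ).natDegree = p ∧ Module.finrank L⟮ω⟯ K = p := by
  have hfd : FiniteDimensional L K := Module.finite_of_finrank_pos (by
    rw [hdeg]; exact pow_pos hp.pos _)
  have h1 : (minpoly L ω).natDegree ≤ p := aux_deg0 hp hω
  have h2 : (minpoly L⟮ω⟯ μ).natDegree ≤ p :=
    aux_deg0 hp (E := L⟮ω⟯) (g := algebraMap L L⟮ω⟯ g)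
      (by rw [hμ]; exact IsScalarTower.algebraMap_apply L L⟮ω⟯ K g)
  have htop : Algebra.adjoin L⟮ω⟯ {μ} = ⊤ := by
    rw [eq_top_iff]
    intro x _
    have hx : x ∈ Algebra.adjoin L ({ω, μ} : Set K) := by rw [hKgen]; trivial
    exact aux_top (E := L⟮ω⟯) ⟨⟨ω, mem_adjoin_simple_self L ω⟩, rfl⟩ hx
  have h3 : Module.finrank L⟮ω⟯ K = (minpoly L⟮ω⟯ μ).natDegree := by
    have hi : IsIntegral L⟮ω⟯ μ := Algebra.IsIntegral.isIntegral μ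
    rw [(PowerBasis.ofAdjoinEqTop hi htop).finrank]
    simp
  have h4 : Module.finrank L L⟮ω⟯ = (minpoly L ω).natDegree :=
    adjoin.finrank (Algebra.IsIntegral.isIntegral ω)
  have h5 := Module.finrank_mul_finrank L L⟮ω⟯ K
  rw [h3, h4, hdeg] at h5
  have hpp := hp.pos
  have h6 : (minpoly L ω).natDegree = p := by
    by_contra hne
    have : (minpoly L ω).natDegree < p := lt_of_le_of_ne h1 hne
    nlinarith
  have h7 : (minpoly L⟮ω⟯ μ).natDegree = p := by
    rw [h6] at h5
    nlinarith
  exact ⟨h6, htop, h7, h3.trans h7⟩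

theorem aux_exval {S F : Type*} [CommRing S] [IsDomain S] [Field F] [Algebra S F]
    (hinj : Function.Injective (algebraMap S F)) {q : S} (hq : Prime q) :
    ∃ O : ValuationSubring F, (∀ s, algebraMap S F s ∈ O) ∧
      ∀ s, O.valuation (algebraMap S F s) < 1 ↔ q ∣ s := by
  have hP : (Ideal.span {q}).IsPrime := (Ideal.span_singleton_prime hq.ne_zero).2 hq
  let Sq := Localization.AtPrime (Ideal.span {q})
  have hun : ∀ y : (Ideal.span {q}).primeCompl, IsUnit (algebraMap S F y) := by
    intro y
    rw [isUnit_iff_ne_zero, Ne, map_eq_zero_iff _ hinj]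
    intro h
    apply y.2
    rw [h]; exact zero_mem _
  let φ : Sq →+* F := IsLocalization.lift (M := (Ideal.span {q}).primeCompl) hun
  have hφ : ∀ s, φ (algebraMap S Sq s) = algebraMap S F s := fun s =>
    IsLocalization.lift_eq _ s
  obtain ⟨O, h, hloc⟩ := IsLocalRing.exists_factor_valuationRing φ
  have hmem : ∀ s, algebraMap S F s ∈ O := fun s => by rw [← hφ]; exact h _
  refine ⟨O, hmem, fun s => ?_⟩
  have e1 : IsUnit (algebraMap S Sq s) ↔ ¬ q ∣ s := by
    rw [IsLocalization.AtPrime.isUnit_to_map_iff _ (Ideal.span {q}), Ideal.mem_primeCompl_iff,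
      Ideal.mem_span_singleton]
  have e2 : IsUnit (φ.codRestrict O.toSubring h (algebraMap S Sq s)) ↔ IsUnit (algebraMap S Sq s) :=
    ⟨fun hh => hloc.1 _ hh, fun hh => hh.map _⟩
  have e3 := O.valuation_lt_one_iff (⟨algebraMap S F s, hmem s⟩)
  have e4 : φ.codRestrict O.toSubring h (algebraMap S Sq s) = ⟨algebraMap S F s, hmem s⟩ :=
    Subtype.ext (hφ s)
  rw [e4] at e2
  rw [← e3, IsLocalRing.mem_maximalIdeal, mem_nonunits_iff, not_iff_comm, ← e1]
  exact e2.symm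

open IntermediateField in
theorem aux_val {S L K : Type*} [CommRing S] [IsDomain S] [Field L] [CharZero L]
    [Algebra S L] [IsFractionRing S L] [Field K] [Algebra L K] [Algebra S K] [IsScalarTower S L K]
    {p : ℕ} (hp : p.Prime) (hpS : Prime (p : S)) {f g h₁ h₂ : S} {ω μ : K}
    (hω : ω ^ p = algebraMap S K f) (hμ : μ ^ p = algebraMap S K g)
    (hKgen : Algebra.adjoin L ({ω, μ} : Set K) = ⊤) (hdeg : Module.finrank L K = p ^ 2)
    (hh₁ : ¬ (p : S) ∣ h₁) (hh₂ : ¬ (p : S) ∣ h₂)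
    (hu : ∃ w, IsIntegral S w ∧ (ω - algebraMap S K h₁) ^ p = p * w)
    (hZ : IsIntegral S ((algebraMap S K h₁ * (μ - algebraMap S K h₂) +
      algebraMap S K h₂ * (ω - algebraMap S K h₁)) ^ (p - 1) / (p : K))) :
    ∃ O : ValuationSubring K, (∀ s, algebraMap S K s ∈ O) ∧
      (∀ s, O.valuation (algebraMap S K s) < 1 ↔ (p : S) ∣ s) ∧
      O.valuation ((algebraMap S K h₁ * (μ - algebraMap S K h₂) +
      algebraMap S K h₂ * (ω - algebraMap S K h₁)) ^ (p - 1) / (p : K)) = 1 := by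
  have hfd : FiniteDimensional L K := Module.finite_of_finrank_pos (by
    rw [hdeg]; exact pow_pos hp.pos _)
  have hinj : Function.Injective (algebraMap S K) := by
    rw [IsScalarTower.algebraMap_eq S L K]
    exact (algebraMap L K).injective.comp (IsFractionRing.injective S L)
  have : CharZero K := charZero_of_injective_algebraMap (algebraMap L K).injective
  have hp0 : (p : K) ≠ 0 := by exact_mod_cast hp.ne_zero
  obtain ⟨d1, htop, d2, d3⟩ := aux_deg hp (L := L) (f := algebraMap S L f) (g := algebraMap S L g)
    (by rw [hω, ← IsScalarTower.algebraMap_apply]) (by rw [hμ, ← IsScalarTower.algebraMap_apply])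
    hKgen hdeg
  let Ω := AlgebraicClosure K
  have hΩ : Function.Injective (algebraMap S Ω) := by
    rw [IsScalarTower.algebraMap_eq S K Ω]
    exact (algebraMap K Ω).injective.comp hinj
  obtain ⟨O, hO1, hO2⟩ := aux_exval hΩ hpS
  set V := O.valuation with hV
  have hint : ∀ x : Ω, IsIntegral S x → V x ≤ 1 := fun x hx =>
    (O.valuation_le_one_iff x).2 (aux_mem O hO1 hx)
  have hunit : ∀ s, ¬ (p : S) ∣ s → V (algebraMap S Ω s) = 1 := fun s hs =>
    le_antisymm ((O.valuation_le_one_iff _).2 (hO1 s)) (not_lt.1 fun h => hs ((hO2 s).1 h))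
  have hpV : V (p : Ω) < 1 := by
    have := (hO2 (p : S)).2 dvd_rfl
    simpa using this
  -- the trace
  let E := L⟮ω⟯
  let ωE : E := ⟨ω, mem_adjoin_simple_self L ω⟩
  let jE : S → E := fun s => algebraMap L E (algebraMap S L s)
  have hjE : ∀ s, algebraMap E K (jE s) = algebraMap S K s := fun s => by
    simp only [jE]
    rw [← IsScalarTower.algebraMap_apply L E K, ← IsScalarTower.algebraMap_apply S L K]
  let θ : E := jE h₂ * (ωE - jE h₁) - jE h₁ * jE h₂
  set X := algebraMap S K h₁ * (μ - algebraMap S K h₂) +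
      algebraMap S K h₂ * (ω - algebraMap S K h₁) with hX
  have hωE : algebraMap E K ωE = ω := rfl
  have hθ : algebraMap E K θ = algebraMap S K h₂ * (ω - algebraMap S K h₁) -
      algebraMap S K h₁ * algebraMap S K h₂ := by
    simp only [θ, map_sub, map_mul, hjE, hωE]
  have hXθ : X = algebraMap E K (jE h₁) * μ + algebraMap E K θ := by
    rw [hθ, hjE, hX]; ring
  have htr : Algebra.trace E K (X ^ (p - 1)) = p * θ ^ (p - 1) := by
    rw [hXθ]
    exact aux_trace2 hp (g := jE g) (Algebra.IsIntegral.isIntegral μ) htop d2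
      (by rw [hμ, hjE]) d3 _ _
  have htr2 : Algebra.trace E K (X ^ (p - 1) / p) = θ ^ (p - 1) := by
    have hpE : (p : E) ≠ 0 := by exact_mod_cast hp.ne_zero
    have : X ^ (p - 1) / (p : K) = ((p : E)⁻¹) • X ^ (p - 1) := by
      rw [Algebra.smul_def, map_inv₀, map_natCast]; field_simp
    rw [this, map_smul, htr, smul_eq_mul, inv_mul_cancel_left₀ hpE]
  have hsum := trace_eq_sum_embeddings (K := E) (L := K) Ω (x := X ^ (p - 1) / p)
  rw [htr2] at hsum
  have hσS : ∀ (σ : K →ₐ[E] Ω) s, σ (algebraMap S K s) = algebraMap S Ω s := fun σ s => by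
    rw [← hjE, AlgHom.commutes, IsScalarTower.algebraMap_apply E K Ω, hjE,
      ← IsScalarTower.algebraMap_apply S K Ω]
  have hσint : ∀ (σ : K →ₐ[E] Ω) x, IsIntegral S x → IsIntegral S (σ x) := by
    rintro σ x ⟨P, hP, hPx⟩
    refine ⟨P, hP, ?_⟩
    have e : (σ : K →+* Ω).comp (algebraMap S K) = algebraMap S Ω := RingHom.ext (hσS σ)
    have := Polynomial.hom_eval₂ P (algebraMap S K) (σ : K →+* Ω) x
    rw [hPx, map_zero, e] at this
    exact this.symm
  have hVθ : V (algebraMap E Ω θ) = 1 := by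
    obtain ⟨w, hw, huw⟩ := hu
    have hVu : V (algebraMap K Ω (ω - algebraMap S K h₁)) < 1 := by
      have h1 : V (algebraMap K Ω (ω - algebraMap S K h₁)) ^ p < 1 := by
        rw [← map_pow, ← map_pow, huw, map_mul, map_mul, map_natCast]
        exact mul_lt_one_of_lt_of_le hpV (hint _ hw.algebraMap)
      by_contra h
      exact absurd h1 (not_lt.2 (one_le_pow₀ (not_lt.1 h)))
    rw [IsScalarTower.algebraMap_apply E K Ω, hθ, map_sub, map_mul, map_mul,
      ← IsScalarTower.algebraMap_apply S K Ω, ← IsScalarTower.algebraMap_apply S K Ω]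
    have e1 : V (algebraMap S Ω h₁ * algebraMap S Ω h₂) = 1 := by
      rw [map_mul, hunit _ hh₁, hunit _ hh₂, one_mul]
    have e2 : V (algebraMap S Ω h₂ * algebraMap K Ω (ω - algebraMap S K h₁)) < 1 := by
      rw [map_mul, hunit _ hh₂, one_mul]; exact hVu
    rw [Valuation.map_sub_swap, Valuation.map_sub_eq_of_lt_left, e1]
    rw [e1]; exact e2
  obtain ⟨σ, hσ⟩ : ∃ σ : K →ₐ[E] Ω, V (σ (X ^ (p - 1) / p)) = 1 := by
    by_contra hcon
    push Not at hcon
    have : V (∑ σ : K →ₐ[E] Ω, σ (X ^ (p - 1) / p)) < 1 :=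
      Valuation.map_sum_lt _ one_ne_zero fun σ _ =>
        lt_of_le_of_ne (hint _ (hσint σ _ hZ)) (hcon σ)
    rw [← hsum, map_pow, map_pow, hVθ, one_pow] at this
    exact lt_irrefl _ this
  let O' := O.comap (σ : K →+* Ω)
  have hO' : ∀ x : K, x ∈ O' ↔ σ x ∈ O := fun x => Iff.rfl
  have hmem : ∀ s, algebraMap S K s ∈ O' := fun s => by rw [hO', hσS]; exact hO1 s
  have hlt : ∀ x : K, O'.valuation x < 1 ↔ V (σ x) < 1 := by
    intro x
    rw [← not_le, ← not_le, not_iff_not]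
    by_cases hx : x = 0
    · subst hx; simp
    · have a1 : (1 : O'.ValueGroup) ≤ O'.valuation x ↔ x⁻¹ ∈ O' := by
        rw [← O'.valuation_le_one_iff, map_inv₀, inv_le_one₀]
        exact zero_lt_iff.2 ((Valuation.ne_zero_iff _).2 hx)
      have a2 : 1 ≤ V (σ x) ↔ (σ x)⁻¹ ∈ O := by
        rw [← O.valuation_le_one_iff, map_inv₀, inv_le_one₀]
        exact zero_lt_iff.2 ((Valuation.ne_zero_iff _).2 (by simpa using hx))
      rw [a1, a2, hO', map_inv₀]
  refine ⟨O', hmem, fun s => ?_, ?_⟩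
  · rw [hlt, hσS, hO2]
  · apply le_antisymm
    · exact (O'.valuation_le_one_iff _).2 (aux_mem O' hmem hZ)
    · rw [← not_lt, hlt, hσ]; exact lt_irrefl _

theorem aux_nec {S K : Type*} [CommRing S] [IsDomain S] [Field K] [Algebra S K] [CharZero K]
    {p : ℕ} (hp : p.Prime) (hpS : Prime (p : S)) (O : ValuationSubring K)
    (hO1 : ∀ s, algebraMap S K s ∈ O)
    (hO2 : ∀ s, O.valuation (algebraMap S K s) < 1 ↔ (p : S) ∣ s) {h₁ h₂ : S}
    (hh₁ : ¬ (p : S) ∣ h₁) {u v e : K} (hue : u ^ p = p * e) (he : O.valuation e = 1)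
    (hZ : O.valuation ((algebraMap S K h₁ * v + algebraMap S K h₂ * u) ^ (p - 1) / (p : K)) = 1)
    (r : ℕ → S) (z : ℕ → K)
    (hz : ∀ i, ∃ α ∈ O, ∃ β ∈ O, ∃ γ ∈ O, z i = α * p + β * u + γ * v)
    (hy : ((p : K)⁻¹ * ∑ i ∈ Finset.Icc 1 p,
      (algebraMap S K (r i) + z i) * v ^ (p - i) * u ^ (i - 1)) ∈ O)
    (i : ℕ) (hi2 : 2 ≤ i) (hip : i ≤ p) : (p : S) ∣ r (i - 1) * h₂ + r i * h₁ := by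
  have hp2 := hp.two_le
  set V := O.valuation with hV
  have hp0 : (p : K) ≠ 0 := by exact_mod_cast hp.ne_zero
  have hpV : V (p : K) < 1 := by
    have := (hO2 (p : S)).2 dvd_rfl
    simpa using this
  have hS : ∀ s, V (algebraMap S K s) ≤ 1 := fun s => (O.valuation_le_one_iff _).2 (hO1 s)
  have hV1 : V (algebraMap S K h₁) = 1 :=
    le_antisymm (hS _) (not_lt.1 fun h => hh₁ ((hO2 _).1 h))
  have hk0 : algebraMap S K h₁ ≠ 0 := fun h => by rw [h, map_zero] at hV1; exact zero_ne_one hV1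
  have he0 : e ≠ 0 := fun h => by rw [h, map_zero] at he; exact zero_ne_one he
  have hu0 : u ≠ 0 := by
    rintro rfl
    rw [zero_pow hp.ne_zero] at hue
    exact mul_ne_zero hp0 he0 hue.symm
  have hVup : V u ^ p = V (p : K) := by rw [← map_pow, hue, map_mul, he, mul_one]
  have hVu : V u < 1 := by
    by_contra h
    have := one_le_pow₀ (n := p) (not_lt.1 h)
    rw [hVup] at this
    exact absurd hpV (not_lt.2 this)
  have hVpu : V (p : K) ≤ V u := by
    rw [← hVup]
    exact pow_le_of_le_one zero_le hVu.le hp.ne_zero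
  have hupe : u ^ (p - 1) * u = p * e := by
    rw [← pow_succ, Nat.sub_add_cancel hp.one_le, hue]
  have hu1 : u ^ (p - 1) ≠ 0 := pow_ne_zero _ hu0
  set t := v / u with ht
  have hvt : v = t * u := by rw [ht]; field_simp
  set s := algebraMap S K h₁ * t + algebraMap S K h₂ with hs
  have hXs : algebraMap S K h₁ * v + algebraMap S K h₂ * u = s * u := by
    rw [hs, hvt]; ring
  have hVs : V (s ^ (p - 1)) = V u := by
    rw [hXs, mul_pow] at hZ
    have h1 : s ^ (p - 1) = u * (s ^ (p - 1) * u ^ (p - 1) / p) / e := by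
      field_simp
      linear_combination -s ^ (p - 1) * hupe
    rw [h1, map_div₀, map_mul, hZ, he, mul_one, div_one]
  have hVs1 : V s < 1 := by
    by_contra h
    have := one_le_pow₀ (n := p - 1) (not_lt.1 h)
    rw [← map_pow, hVs] at this
    exact absurd hVu (not_lt.2 this)
  have hs0 : s ≠ 0 := by
    intro h
    rw [h, zero_pow (by omega), map_zero] at hVs
    exact hu0 ((map_eq_zero V).1 hVs.symm)
  have hVt : V t ≤ 1 := by
    have h1 : t = (s - algebraMap S K h₂) / algebraMap S K h₁ := by
      rw [hs]; field_simp; ring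
    rw [h1, map_div₀, hV1, div_one]
    exact (V.map_sub _ _).trans (max_le hVs1.le (hS _))
  have hVv : V v ≤ V u := by
    rw [hvt, map_mul]; exact mul_le_of_le_one_left' hVt
  have hVz : ∀ i, V (z i) ≤ V u := by
    intro i
    obtain ⟨α, hα, β, hβ, γ, hγ, h⟩ := hz i
    rw [← O.valuation_le_one_iff] at hα hβ hγ
    rw [h]
    refine V.map_add_le (V.map_add_le ?_ ?_) ?_ <;> rw [map_mul]
    · exact (mul_le_of_le_one_left' hα).trans hVpu
    · exact mul_le_of_le_one_left' hβ
    · exact (mul_le_of_le_one_left' hγ).trans hVv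
  have hsum : ∀ c : ℕ → K, ∑ i ∈ Finset.Icc 1 p, c i * v ^ (p - i) * u ^ (i - 1) =
      u ^ (p - 1) * ∑ i ∈ Finset.Icc 1 p, c i * t ^ (p - i) := by
    intro c
    rw [Finset.mul_sum]
    refine Finset.sum_congr rfl fun i hi => ?_
    have hi' := Finset.mem_Icc.1 hi
    have : p - 1 = (p - i) + (i - 1) := by omega
    rw [this, pow_add, hvt, mul_pow]; ring
  rw [hsum, ← O.valuation_le_one_iff] at hy
  have hA : V (∑ i ∈ Finset.Icc 1 p, (algebraMap S K (r i) + z i) * t ^ (p - i)) ≤ V u := by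
    set T := ∑ i ∈ Finset.Icc 1 p, (algebraMap S K (r i) + z i) * t ^ (p - i) with hT
    have h1 : T = u * ((p : K)⁻¹ * (u ^ (p - 1) * T)) / e := by
      field_simp
      linear_combination -T * hupe
    rw [h1, map_div₀, map_mul, he, div_one]
    exact mul_le_of_le_one_right' hy
  have hB : V (∑ i ∈ Finset.Icc 1 p, z i * t ^ (p - i)) ≤ V u := by
    refine V.map_sum_le fun i _ => ?_
    rw [map_mul, map_pow]
    exact (mul_le_of_le_one_right' (pow_le_one' hVt _)).trans (hVz i)
  have hC : V (∑ i ∈ Finset.Icc 1 p, algebraMap S K (r i) * t ^ (p - i)) ≤ V u := by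
    have h1 : ∑ i ∈ Finset.Icc 1 p, algebraMap S K (r i) * t ^ (p - i) =
      ∑ i ∈ Finset.Icc 1 p, (algebraMap S K (r i) + z i) * t ^ (p - i) -
        ∑ i ∈ Finset.Icc 1 p, z i * t ^ (p - i) := by
      rw [← Finset.sum_sub_distrib]
      refine Finset.sum_congr rfl fun i _ => by ring
    rw [h1]
    exact (V.map_sub _ _).trans (max_le hA hB)
  let φ : S →+* O := (algebraMap S K).codRestrict O.toSubring hO1
  let sO : O := ⟨s, (O.valuation_le_one_iff _).1 hVs1.le⟩
  have hdvd : ∀ x : O, V (x : K) ≤ V u → sO ^ (p - 1) ∣ x := by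
    intro x hx
    rw [← hVs] at hx
    obtain ⟨a, ha⟩ := (O.valuation_le_iff _ _).1 hx
    refine ⟨a, Subtype.ext ?_⟩
    rw [← ha]
    exact mul_comm _ _
  have hmax : ∀ x : O, x ∈ IsLocalRing.maximalIdeal O ↔ V (x : K) < 1 := fun x =>
    O.valuation_lt_one_iff x
  have hφm : ∀ x, φ x ∈ IsLocalRing.maximalIdeal O ↔ (p : S) ∣ x := fun x => by
    rw [hmax, ← hO2]; rfl
  refine aux_modp hp hpS hh₁ r (fun k hk => ?_) i hi2 hip
  rw [← hφm]
  refine aux_coeff φ (s := sO) ((hmax _).2 hVs1) (fun h => hs0 (congrArg Subtype.val h)) (p - 1) ?_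
    (p - 1) le_rfl _ ?_ k hk
  · intro x hx
    apply hdvd
    obtain ⟨w, rfl⟩ := (hφm x).1 hx
    have : ((φ (p * w) : O) : K) = p * algebraMap S K w := by
      change algebraMap S K (p * w) = _
      simp
    rw [this, map_mul]
    exact (mul_le_of_le_one_right' (hS _)).trans hVpu
  · apply hdvd
    have h1 : ∀ G : Polynomial S, ((G.eval₂ φ sO : O) : K) = G.eval₂ (algebraMap S K) s := fun G =>
      Polynomial.hom_eval₂ G φ O.subtype sO
    rw [h1, Polynomial.eval₂_finsetSum]
    have h2 : ∑ i ∈ Finset.Icc 1 p, Polynomial.eval₂ (algebraMap S K) s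
        (Polynomial.C (r i * h₁ ^ (i - 1)) * (Polynomial.X - Polynomial.C h₂) ^ (p - i)) =
        algebraMap S K h₁ ^ (p - 1) *
          ∑ i ∈ Finset.Icc 1 p, algebraMap S K (r i) * t ^ (p - i) := by
      rw [Finset.mul_sum]
      refine Finset.sum_congr rfl fun i hi => ?_
      have hi' := Finset.mem_Icc.1 hi
      have : p - 1 = (p - i) + (i - 1) := by omega
      rw [Polynomial.eval₂_mul, Polynomial.eval₂_pow, Polynomial.eval₂_sub, Polynomial.eval₂_C,
        Polynomial.eval₂_C, Polynomial.eval₂_X, this, pow_add, hs, add_sub_cancel_right, mul_pow,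
        map_mul, map_pow]
      ring
    rw [h2, map_mul, map_pow, hV1, one_pow, one_mul]
    exact hC

theorem aux_na {S L K : Type*} [CommRing S] [IsDomain S] [IsIntegrallyClosed S] [Field L]
    [CharZero L]
    [Algebra S L] [IsFractionRing S L] [Field K] [Algebra L K] [Algebra S K] [IsScalarTower S L K]
    {p : ℕ} (hp : p.Prime) (hpS : Prime (p : S)) {f h a : S} {ω : K}
    (hf : f = h ^ p + a * (p : S))
    (hω : ω ^ p = algebraMap S K f) (hdeg : (minpoly L ω).natDegree = p)
    (hicω : IsIntegrallyClosed (Algebra.adjoin S ({ω} : Set K))) : ¬ (p : S) ∣ a := by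
  rintro ⟨a', rfl⟩
  have : CharZero K := charZero_of_injective_algebraMap (algebraMap L K).injective
  have hp0 : (p : K) ≠ 0 := by exact_mod_cast hp.ne_zero
  let B := Algebra.adjoin S ({ω} : Set K)
  let w : B := ⟨ω, Algebra.self_mem_adjoin_singleton S ω⟩
  have hp0' : (p : B) ≠ 0 := fun h => hp0 (by simpa using congrArg Subtype.val h)
  obtain ⟨z, hz⟩ := aux_ua (R := B) hp hp0' (u := w - algebraMap S B h) (h := algebraMap S B h)
    (a := algebraMap S B a') (by
      rw [sub_add_cancel]
      apply Subtype.ext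
      have : ((w ^ p : B) : K) = algebraMap S K f := hω
      rw [this, hf]
      push_cast
      simp)
  refine aux_nd hp hpS hω hdeg (h := h) ⟨z, z.2, ?_⟩
  have := congrArg Subtype.val hz
  push_cast at this
  exact this

theorem aux_dec {S K : Type*} [CommRing S] [Field K] [Algebra S K] (p : ℕ) (ω μ : K) (h₁ h₂ : S)
    (x : Algebra.adjoin S ({ω, μ} : Set K)) :
    ∃ r : S, x - algebraMap S _ r ∈ Pid p ω μ h₁ h₂ := by
  have h1 : omegaA ω μ - algebraMap S _ h₁ ∈ Pid p ω μ h₁ h₂ := Ideal.subset_span (by simp)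
  have h2 : muA ω μ - algebraMap S _ h₂ ∈ Pid p ω μ h₁ h₂ := Ideal.subset_span (by simp)
  obtain ⟨x, hx⟩ := x
  induction hx using Algebra.adjoin_induction with
  | mem x hx =>
    rcases hx with rfl | hx
    · exact ⟨h₁, h1⟩
    · have : x = μ := hx
      subst this
      exact ⟨h₂, h2⟩
  | algebraMap r =>
    refine ⟨r, ?_⟩
    convert zero_mem (Pid p ω μ h₁ h₂)
    exact sub_eq_zero.2 rfl
  | add x y hx hy ihx ihy =>
    obtain ⟨r, hr⟩ := ihx
    obtain ⟨r', hr'⟩ := ihy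
    refine ⟨r + r', ?_⟩
    convert add_mem hr hr' using 1
    rw [map_add, ← sub_eq_zero]
    have : (⟨x + y, add_mem hx hy⟩ : Algebra.adjoin S ({ω, μ} : Set K)) = ⟨x, hx⟩ + ⟨y, hy⟩ := rfl
    rw [this]; ring
  | mul x y hx hy ihx ihy =>
    obtain ⟨r, hr⟩ := ihx
    obtain ⟨r', hr'⟩ := ihy
    refine ⟨r * r', ?_⟩
    convert add_mem (Ideal.mul_mem_right ⟨y, hy⟩ _ hr)
      (Ideal.mul_mem_left _ (algebraMap S _ r) hr') using 1
    have : (⟨x * y, mul_mem hx hy⟩ : Algebra.adjoin S ({ω, μ} : Set K)) = ⟨x, hx⟩ * ⟨y, hy⟩ := rfl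
    rw [this, map_mul]; ring

theorem stmt10
    {S : Type*} [CommRing S] [IsDomain S] [IsNoetherianRing S] [IsIntegrallyClosed S]
    {L : Type*} [Field L] [CharZero L] [Algebra S L] [IsFractionRing S L]
    {K : Type*} [Field K] [Algebra L K] [Algebra S K] [IsScalarTower S L K]
    {p : ℕ} (hp : p.Prime) (hp3 : 3 ≤ p) (hpS : Prime ((p : ℕ) : S))
    (hSmodp : IsIntegrallyClosed (S ⧸ Ideal.span {((p : ℕ) : S)}))
    {f g h₁ h₂ a b : S} (hf : f = h₁ ^ p + a * (p : S)) (hg : g = h₂ ^ p + b * (p : S))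
    (hfg : (¬IsUnit f ∧ ¬IsUnit g ∧ PaperSquarefree f ∧ PaperSquarefree g ∧ SatisfiesA1 f g) ∨
      (IsUnit f ∧ IsUnit g ∧ (∀ x : S, x ^ p ≠ f) ∧ (∀ x : S, x ^ p ≠ g)))
    {ω μ : K} (hω : ω ^ p = algebraMap S K f) (hμ : μ ^ p = algebraMap S K g)
    (hKgen : Algebra.adjoin L ({ω, μ} : Set K) = ⊤)
    (hdeg : Module.finrank L K = p ^ 2)
    (hicω : IsIntegrallyClosed (Algebra.adjoin S ({ω} : Set K)))
    (hicμ : IsIntegrallyClosed (Algebra.adjoin S ({μ} : Set K)))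
    (hh₁ : h₁ ≠ 0) (hh₂ : h₂ ≠ 0)
    (hfg1 : ∃ x y : S, f * g = x ^ p + y * (p : S) ^ 2)
    (aa : ℕ → Algebra.adjoin S ({ω, μ} : Set K)) :
    ((p : K)⁻¹ * ∑ i ∈ Finset.Icc 1 p,
        (aa i : K) * (μ - algebraMap S K h₂) ^ (p - i) * (ω - algebraMap S K h₁) ^ (i - 1)) ∈
      integralClosure S K ↔
    ∀ i : ℕ, 2 ≤ i → i ≤ p →
      aa (i - 1) * algebraMap S _ h₂ + aa i * algebraMap S _ h₁ ∈ Pid p ω μ h₁ h₂ := by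
  have hfd : FiniteDimensional L K := Module.finite_of_finrank_pos (by
    rw [hdeg]; exact pow_pos hp.pos _)
  have hinj : Function.Injective (algebraMap S K) := by
    rw [IsScalarTower.algebraMap_eq S L K]
    exact (algebraMap L K).injective.comp (IsFractionRing.injective S L)
  have : FaithfulSMul S K := (faithfulSMul_iff_algebraMap_injective S K).2 hinj
  have : CharZero K := charZero_of_injective_algebraMap (algebraMap L K).injective
  have hp0 : (p : K) ≠ 0 := by exact_mod_cast hp.ne_zero
  have h1n := aux_h hp hpS hf hfg hfg1
  have h2n : ¬ (p : S) ∣ h₂ := by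
    refine aux_h (g := f) hp hpS hg ?_ (by simpa only [mul_comm f g] using hfg1)
    rcases hfg with ⟨x1, x2, x3, x4, x5⟩ | ⟨x1, x2, x3, x4⟩
    · exact Or.inl ⟨x2, x1, x4, x3, fun P hP h => x5 P hP h.symm⟩
    · exact Or.inr ⟨x2, x1, x4, x3⟩
  obtain ⟨d, hd⟩ := aux_d hp hpS hf hg hfg1
  obtain ⟨d1, -⟩ := aux_deg hp (L := L) (f := algebraMap S L f) (g := algebraMap S L g)
    (by rw [hω, ← IsScalarTower.algebraMap_apply]) (by rw [hμ, ← IsScalarTower.algebraMap_apply])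
    hKgen hdeg
  have han := aux_na hp hpS hf hω d1 hicω
  -- the integral closure
  have hRic : IsIntegrallyClosed (integralClosure S K) :=
    integralClosure.isIntegrallyClosedOfFiniteExtension L
  have hωi : IsIntegral S ω := IsIntegral.of_pow hp.pos (by rw [hω]; exact isIntegral_algebraMap)
  have hμi : IsIntegral S μ := IsIntegral.of_pow hp.pos (by rw [hμ]; exact isIntegral_algebraMap)
  let ι : S →+* integralClosure S K := algebraMap S (integralClosure S K)
  have hι : ∀ s, ((ι s : integralClosure S K) : K) = algebraMap S K s := fun s => rfl
  let u : integralClosure S K := ⟨ω, hωi⟩ - ι h₁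
  let v : integralClosure S K := ⟨μ, hμi⟩ - ι h₂
  have hu : (u : K) = ω - algebraMap S K h₁ := rfl
  have hv : (v : K) = μ - algebraMap S K h₂ := rfl
  have hpR : ((p : integralClosure S K) : K) = p := by push_cast; rfl
  have hpR0 : (p : integralClosure S K) ≠ 0 := fun h => hp0 (by rw [← hpR, h]; rfl)
  have hup : (u + ι h₁) ^ p = ι h₁ ^ p + ι a * p := by
    apply Subtype.ext
    have : (((u + ι h₁) ^ p : integralClosure S K) : K) = ω ^ p := by
      simp only [u, sub_add_cancel]; rfl
    rw [this, hω, hf]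
    push_cast
    rw [hι, hι]
  have hvp : (v + ι h₂) ^ p = ι h₂ ^ p + ι b * p := by
    apply Subtype.ext
    have : (((v + ι h₂) ^ p : integralClosure S K) : K) = μ ^ p := by
      simp only [v, sub_add_cancel]; rfl
    rw [this, hμ, hg]
    push_cast
    rw [hι, hι]
  have hdR : ι a * ι h₂ ^ p + ι b * ι h₁ ^ p = p * ι d := by
    have := congrArg ι hd
    simpa using this
  have hAle : Algebra.adjoin S ({ω, μ} : Set K) ≤ integralClosure S K := by
    rw [Algebra.adjoin_le_iff]
    rintro y (rfl | hy)
    · exact hωi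
    · have : y = μ := hy
      rw [this]; exact hμi
  let j := Subalgebra.inclusion hAle
  have hj : ∀ x, ((j x : integralClosure S K) : K) = x := fun x => rfl
  have hjS : ∀ s, j (algebraMap S _ s) = ι s := fun s => j.commutes s
  constructor
  · intro hy
    obtain ⟨Z, hZ⟩ := aux_Z hp hp3 hpR0 hup hvp hdR
    have hZ' : (algebraMap S K h₁ * (μ - algebraMap S K h₂) +
      algebraMap S K h₂ * (ω - algebraMap S K h₁)) ^ (p - 1) / (p : K) = Z := by
      have := congrArg Subtype.val hZ
      push_cast at this
      rw [hι, hι, hu, hv] at this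
      rw [this]; field_simp
    obtain ⟨q, hq⟩ := aux_up hp hup
    set e := ι a - ι h₁ ^ (p - 1) * u - u ^ 2 * q with he
    have hqK : (ω - algebraMap S K h₁) ^ p = p * (e : K) := by
      have := congrArg Subtype.val hq
      push_cast at this
      exact this
    obtain ⟨O, hO1, hO2, hO3⟩ := aux_val hp hpS hω hμ hKgen hdeg h1n h2n ⟨e, e.2, hqK⟩
      (by rw [hZ']; exact Z.2)
    have hRO : ∀ x : integralClosure S K, (x : K) ∈ O := fun x => aux_mem O hO1 x.2
    have hR1 : ∀ x : integralClosure S K, O.valuation (x : K) ≤ 1 := fun x =>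
      (O.valuation_le_one_iff _).2 (hRO x)
    have hVu : O.valuation (u : K) < 1 := by
      have h1 : O.valuation (u : K) ^ p < 1 := by
        rw [← map_pow, hu, hqK, map_mul]
        refine mul_lt_one_of_lt_of_le ?_ (hR1 _)
        have := (hO2 (p : S)).2 dvd_rfl
        simpa using this
      by_contra h
      exact absurd h1 (not_lt.2 (one_le_pow₀ (not_lt.1 h)))
    have hVa : O.valuation (algebraMap S K a) = 1 :=
      le_antisymm ((O.valuation_le_one_iff _).2 (hO1 a)) (not_lt.1 fun h => han ((hO2 _).1 h))
    have hVe : O.valuation (e : K) = 1 := by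
      have h1 : (e : K) = algebraMap S K a -
          (u : K) * ((ι h₁ ^ (p - 1) + u * q : integralClosure S K) : K) := by
        rw [he]; push_cast; rw [hι, hι]; ring
      rw [h1, Valuation.map_sub_eq_of_lt_left, hVa]
      rw [hVa, map_mul]
      exact mul_lt_one_of_lt_of_le hVu (hR1 _)
    choose r hr using fun i => aux_dec p ω μ h₁ h₂ (aa i)
    have key := aux_nec hp hpS O hO1 hO2 h1n hqK hVe hO3 r
      (fun i => ((aa i - algebraMap S _ (r i) : Algebra.adjoin S ({ω, μ} : Set K)) : K)) (by
        intro i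
        obtain ⟨α, z1, hz1, h1⟩ := Ideal.mem_span_insert.1 (hr i)
        obtain ⟨β, z2, hz2, h2⟩ := Ideal.mem_span_insert.1 hz1
        obtain ⟨γ, h3⟩ := Ideal.mem_span_singleton'.1 hz2
        refine ⟨α, hRO (j α), β, hRO (j β), γ, hRO (j γ), ?_⟩
        simp only [h1, h2, ← h3]
        push_cast
        rw [← add_assoc]
        rfl) (by
        have : ∀ i, algebraMap S K (r i) +
            ((aa i - algebraMap S _ (r i) : Algebra.adjoin S ({ω, μ} : Set K)) : K) = aa i := by
          intro i
          push_cast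
          rw [add_sub_cancel]
        simp only [this]
        exact aux_mem O hO1 hy)
    intro i hi2 hip
    obtain ⟨w, hw⟩ := key i hi2 hip
    have hpP : (p : Algebra.adjoin S ({ω, μ} : Set K)) ∈ Pid p ω μ h₁ h₂ :=
      Ideal.subset_span (by simp)
    have hw' := congrArg (algebraMap S (Algebra.adjoin S ({ω, μ} : Set K))) hw
    simp only [map_add, map_mul, map_natCast] at hw'
    have e1 := add_mem (add_mem (Ideal.mul_mem_right (algebraMap S _ w) _ hpP)
      (Ideal.mul_mem_right (algebraMap S _ h₂) _ (hr (i - 1))))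
      (Ideal.mul_mem_right (algebraMap S _ h₁) _ (hr i))
    convert e1 using 1
    rw [← hw']; ring
  · intro hc
    obtain ⟨k, hk⟩ := aux_suff hp hp3 hpR0 hup hvp hdR (fun i => j (aa i)) (by
      intro i hi2 hip
      have h1 := Ideal.mem_map_of_mem (j : _ →+* integralClosure S K) (hc i hi2 hip)
      rw [Pid, Ideal.map_span] at h1
      have h2 : j (aa (i - 1)) * ι h₂ + j (aa i) * ι h₁ =
          (j : _ →+* integralClosure S K) (aa (i - 1) * algebraMap S _ h₂ +
            aa i * algebraMap S _ h₁) := rfl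
      rw [h2]
      refine Ideal.span_mono ?_ h1
      rintro _ ⟨x, (rfl | rfl | hx), rfl⟩
      · simp
      · right; left; rfl
      · right; right
        have : x = muA ω μ - algebraMap S _ h₂ := hx
        rw [this]; rfl)
    have hk' := congrArg Subtype.val hk
    push_cast at hk'
    simp only [hι, hu, hv, hj] at hk'
    set T := ∑ i ∈ Finset.Icc 1 p, (aa i : K) * (μ - algebraMap S K h₂) ^ (p - i) *
      (ω - algebraMap S K h₁) ^ (i - 1) with hT
    have hTi : IsIntegral S T := by
      refine IsIntegral.sum _ fun i _ => ?_
      exact ((hAle (aa i).2).mul (v.2.pow _)).mul (u.2.pow _)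
    refine aux_desc hpS (h := h₁ ^ (p - 1)) (fun h => h1n (hpS.dvd_of_dvd_pow h)) ?_ ?_
    · rw [Algebra.smul_def, map_natCast, mul_inv_cancel_left₀ hp0]
      exact hTi
    · have : h₁ ^ (p - 1) • ((p : K)⁻¹ * T) = k := by
        rw [Algebra.smul_def, map_pow]
        field_simp
        linear_combination hk'
      rw [this]
      exact k.2
end

section
/- Assume S[ω] and S[μ] are integrally closed (i.e. f,g ∉ S^{p∧p²}) and h₁ ≠ 0, h₂ ≠ 0. Then for the prime P = (p, ω−h₁, μ−h₂)A, one has P^* = (A :_K P) = A·1 + A·p^{−1}(ω−h₁)^{p−1}(μ−h₂)^{p−1}. -/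
theorem aux_span {R K : Type*} [CommRing R] [CommRing K] [Algebra R K] {p : ℕ} (hp : 0 < p)
    {X Y : K} {c d : ℕ → R}
    (hX : X ^ p = ∑ i ∈ Finset.range p, algebraMap R K (c i) * X ^ i)
    (hY : Y ^ p = ∑ i ∈ Finset.range p, algebraMap R K (d i) * Y ^ i)
    (z : K) (hz : z ∈ Algebra.adjoin R ({X, Y} : Set K)) :
    z ∈ Submodule.span R (Set.range fun ij : Fin p × Fin p => X ^ (ij.1 : ℕ) * Y ^ (ij.2 : ℕ)) := by
  set M := Submodule.span R (Set.range fun ij : Fin p × Fin p => X ^ (ij.1 : ℕ) * Y ^ (ij.2 : ℕ)) with hM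
  have hgen : ∀ i j, i < p → j < p → X ^ i * Y ^ j ∈ M := fun i j hi hj =>
    Submodule.subset_span ⟨(⟨i, hi⟩, ⟨j, hj⟩), rfl⟩
  have hXm : ∀ m ∈ M, X * m ∈ M := by
    intro m hm
    induction hm using Submodule.span_induction with
    | mem x hx =>
      obtain ⟨⟨i, j⟩, rfl⟩ := hx
      simp only
      rcases lt_or_ge ((i : ℕ) + 1) p with h | h
      · have := hgen _ _ h j.2
        rwa [pow_succ', mul_assoc] at this
      · have hi : (i : ℕ) + 1 = p := by have := i.2; omega
        rw [← mul_assoc, ← pow_succ', hi, hX, Finset.sum_mul]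
        refine Submodule.sum_mem _ fun k hk => ?_
        rw [mul_assoc, ← Algebra.smul_def]
        exact M.smul_mem _ (hgen _ _ (Finset.mem_range.1 hk) j.2)
    | zero => simp
    | add x y _ _ hx hy => rw [mul_add]; exact M.add_mem hx hy
    | smul r x _ hx => rw [mul_smul_comm]; exact M.smul_mem _ hx
  have hYm : ∀ m ∈ M, Y * m ∈ M := by
    intro m hm
    induction hm using Submodule.span_induction with
    | mem x hx =>
      obtain ⟨⟨i, j⟩, rfl⟩ := hx
      simp only
      rcases lt_or_ge ((j : ℕ) + 1) p with h | h
      · have := hgen _ _ i.2 h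
        rwa [pow_succ', mul_left_comm] at this
      · have hi : (j : ℕ) + 1 = p := by have := j.2; omega
        rw [mul_left_comm, ← pow_succ', hi, hY, Finset.mul_sum]
        refine Submodule.sum_mem _ fun k hk => ?_
        rw [mul_left_comm, ← Algebra.smul_def]
        exact M.smul_mem _ (hgen _ _ i.2 (Finset.mem_range.1 hk))
    | zero => simp
    | add x y _ _ hx hy => rw [mul_add]; exact M.add_mem hx hy
    | smul r x _ hx => rw [mul_smul_comm]; exact M.smul_mem _ hx
  have key : ∀ m ∈ M, z * m ∈ M := by
    induction hz using Algebra.adjoin_induction with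
    | mem x hx =>
      rcases hx with rfl | rfl
      · exact hXm
      · exact hYm
    | algebraMap r => intro m hm; rw [← Algebra.smul_def]; exact M.smul_mem _ hm
    | add x y _ _ hx hy => intro m hm; rw [add_mul]; exact M.add_mem (hx m hm) (hy m hm)
    | mul x y _ _ hx hy => intro m hm; rw [mul_assoc]; exact hx _ (hy m hm)
  have := key _ (hgen 0 0 hp hp)
  simpa using this

theorem aux_pow_s14 {S K : Type*} [CommRing S] [CommRing K] [Algebra S K] {p : ℕ} (hp : p.Prime)
    {ω : K} {f h a : S} (hf : f = h ^ p + a * (p : S)) (hω : ω ^ p = algebraMap S K f) :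
    ∃ c : ℕ → S, (ω - algebraMap S K h) ^ p =
      (p : K) * ∑ i ∈ Finset.range p, algebraMap S K (c i) * (ω - algebraMap S K h) ^ i := by
  refine ⟨fun k => if k = 0 then a else -(h ^ (p - k) * ((p.choose k / p : ℕ) : S)), ?_⟩
  have h1 := Commute.add_pow_prime_eq hp (Commute.all (ω - algebraMap S K h) (algebraMap S K h))
  rw [sub_add_cancel, hω, hf] at h1
  rw [Finset.range_eq_Ico, ← Finset.Ioo_insert_left hp.pos, Finset.sum_insert (by simp)]
  have h2 : ∑ k ∈ Finset.Ioo 0 p, algebraMap S K (if k = 0 then a else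
      -(h ^ (p - k) * ((p.choose k / p : ℕ) : S))) * (ω - algebraMap S K h) ^ k =
      - ∑ k ∈ Finset.Ioo 0 p, (ω - algebraMap S K h) ^ k * algebraMap S K h ^ (p - k) *
        ((p.choose k / p : ℕ) : K) := by
    rw [← Finset.sum_neg_distrib]
    refine Finset.sum_congr rfl fun k hk => ?_
    rw [if_neg (by have := (Finset.mem_Ioo.1 hk).1; omega)]
    simp only [map_neg, map_mul, map_pow, map_natCast]
    ring
  rw [h2]
  simp only [map_add, map_mul, map_pow, map_natCast] at h1
  simp only [if_true, pow_zero]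
  have h3 : ∑ k ∈ Finset.Ioo 0 p, (ω - algebraMap S K h) ^ k * algebraMap S K h ^ (p - k) *
        ((p.choose k / p : ℕ) : K) = (ω - algebraMap S K h) * algebraMap S K h *
      ∑ k ∈ Finset.Ioo 0 p, (ω - algebraMap S K h) ^ (k - 1) * algebraMap S K h ^ (p - k - 1) *
        ((p.choose k / p : ℕ) : K) := by
    rw [Finset.mul_sum]
    refine Finset.sum_congr rfl fun k hk => ?_
    obtain ⟨hk1, hk2⟩ := Finset.mem_Ioo.1 hk
    obtain ⟨m, rfl⟩ : ∃ m, k = m + 1 := ⟨k - 1, by omega⟩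
    obtain ⟨l, hl⟩ : ∃ l, p - (m + 1) = l + 1 := ⟨p - (m + 1) - 1, by omega⟩
    rw [hl, Nat.add_sub_cancel, Nat.add_sub_cancel]
    ring
  rw [h3]
  linear_combination -h1

theorem stmt14
    {S : Type*} [CommRing S] [IsDomain S] [IsNoetherianRing S] [IsIntegrallyClosed S]
    {L : Type*} [Field L] [CharZero L] [Algebra S L] [IsFractionRing S L]
    {K : Type*} [Field K] [Algebra L K] [Algebra S K] [IsScalarTower S L K]
    {p : ℕ} (hp : p.Prime) (hp3 : 3 ≤ p) (hpS : Prime ((p : ℕ) : S))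
    (hSmodp : IsIntegrallyClosed (S ⧸ Ideal.span {((p : ℕ) : S)}))
    {f g h₁ h₂ a b : S} (hf : f = h₁ ^ p + a * (p : S)) (hg : g = h₂ ^ p + b * (p : S))
    (hfg : (¬IsUnit f ∧ ¬IsUnit g ∧ PaperSquarefree f ∧ PaperSquarefree g ∧ SatisfiesA1 f g) ∨
      (IsUnit f ∧ IsUnit g ∧ (∀ x : S, x ^ p ≠ f) ∧ (∀ x : S, x ^ p ≠ g)))
    {ω μ : K} (hω : ω ^ p = algebraMap S K f) (hμ : μ ^ p = algebraMap S K g)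
    (hKgen : Algebra.adjoin L ({ω, μ} : Set K) = ⊤)
    (hdeg : Module.finrank L K = p ^ 2)
    (hicω : IsIntegrallyClosed (Algebra.adjoin S ({ω} : Set K)))
    (hicμ : IsIntegrallyClosed (Algebra.adjoin S ({μ} : Set K)))
    (hh₁ : h₁ ≠ 0) (hh₂ : h₂ ≠ 0)
 :
    {x : K | ∀ z ∈ Pid p ω μ h₁ h₂, x * (z : K) ∈ Algebra.adjoin S ({ω, μ} : Set K)} =
      {x : K | ∃ α β : Algebra.adjoin S ({ω, μ} : Set K),
        x = (α : K) + (β : K) * ((p : K)⁻¹ *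
          ((ω - algebraMap S K h₁) ^ (p - 1) * (μ - algebraMap S K h₂) ^ (p - 1)))} := by
  classical
  obtain ⟨c, hc⟩ := aux_pow_s14 hp hf hω
  obtain ⟨d, hd⟩ := aux_pow_s14 hp hg hμ
  set A := Algebra.adjoin S ({ω, μ} : Set K) with hA
  set X := ω - algebraMap S K h₁ with hX
  set Y := μ - algebraMap S K h₂ with hY
  have hωA : ω ∈ A := Algebra.subset_adjoin (Set.mem_insert _ _)
  have hμA : μ ∈ A := Algebra.subset_adjoin (Set.mem_insert_of_mem _ rfl)
  have hXA : X ∈ A := sub_mem hωA (A.algebraMap_mem _)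
  have hYA : Y ∈ A := sub_mem hμA (A.algebraMap_mem _)
  have hpK : (p : K) ≠ 0 := by
    haveI : CharZero K := charZero_of_injective_algebraMap (algebraMap L K).injective
    exact_mod_cast hp.ne_zero
  have hinj : Function.Injective (algebraMap S K) := by
    rw [IsScalarTower.algebraMap_eq S L K]
    exact (algebraMap L K).injective.comp (IsFractionRing.injective S L)
  -- quotients
  obtain ⟨u, huA, hu⟩ : ∃ u ∈ A, X ^ p = p * u :=
    ⟨_, sum_mem fun i _ => mul_mem (A.algebraMap_mem _) (pow_mem hXA _), hc⟩
  obtain ⟨v, hvA, hv⟩ : ∃ v ∈ A, Y ^ p = p * v :=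
    ⟨_, sum_mem fun i _ => mul_mem (A.algebraMap_mem _) (pow_mem hYA _), hd⟩
  -- spanning over S
  have hspanS : ∀ z ∈ A, z ∈ Submodule.span S
      (Set.range fun ij : Fin p × Fin p => X ^ (ij.1 : ℕ) * Y ^ (ij.2 : ℕ)) := by
    intro z hz
    refine aux_span (c := fun i => p * c i) (d := fun i => p * d i) hp.pos ?_ ?_ z ?_
    · rw [hc, Finset.mul_sum]; simp [mul_assoc]
    · rw [hd, Finset.mul_sum]; simp [mul_assoc]
    · refine (Algebra.adjoin_le ?_ : A ≤ _) hz
      have e1 : X ∈ Algebra.adjoin S ({X, Y} : Set K) := Algebra.subset_adjoin (by simp)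
      have e2 : Y ∈ Algebra.adjoin S ({X, Y} : Set K) := Algebra.subset_adjoin (by simp)
      rintro t (rfl | rfl)
      · simpa [hX] using add_mem e1 (Subalgebra.algebraMap_mem _ h₁)
      · simpa [hY] using add_mem e2 (Subalgebra.algebraMap_mem _ h₂)
  have hcoord : ∀ z ∈ A, ∃ k : ℕ → ℕ → S, z = ∑ i ∈ Finset.range p, ∑ j ∈ Finset.range p,
      algebraMap S K (k i j) * (X ^ i * Y ^ j) := by
    intro z hz
    obtain ⟨k, hk⟩ := (Submodule.mem_span_range_iff_exists_fun S).1 (hspanS z hz)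
    refine ⟨fun i j => if h : i < p ∧ j < p then k (⟨i, h.1⟩, ⟨j, h.2⟩) else 0, ?_⟩
    rw [← hk, Fintype.sum_prod_type, Finset.sum_range]
    refine Finset.sum_congr rfl fun i _ => ?_
    rw [Finset.sum_range]
    refine Finset.sum_congr rfl fun j _ => ?_
    simp [Algebra.smul_def]
  have hLI : LinearIndependent L
      (fun ij : Fin p × Fin p => X ^ (ij.1 : ℕ) * Y ^ (ij.2 : ℕ)) := by
    apply linearIndependent_of_top_le_span_of_card_eq_finrank
    · intro z _
      refine aux_span (c := fun i => algebraMap S L (p * c i))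
        (d := fun i => algebraMap S L (p * d i)) hp.pos ?_ ?_ z ?_
      · rw [hc, Finset.mul_sum]
        simp only [← IsScalarTower.algebraMap_apply S L K]; simp [mul_assoc]
      · rw [hd, Finset.mul_sum]
        simp only [← IsScalarTower.algebraMap_apply S L K]; simp [mul_assoc]
      · have hz : z ∈ Algebra.adjoin L ({ω, μ} : Set K) := by rw [hKgen]; trivial
        refine (Algebra.adjoin_le ?_ : Algebra.adjoin L ({ω, μ} : Set K) ≤ _) hz
        have e1 : X ∈ Algebra.adjoin L ({X, Y} : Set K) := Algebra.subset_adjoin (by simp)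
        have e2 : Y ∈ Algebra.adjoin L ({X, Y} : Set K) := Algebra.subset_adjoin (by simp)
        rintro t (rfl | rfl)
        · simpa [hX, ← IsScalarTower.algebraMap_apply S L K] using
            add_mem e1 (Subalgebra.algebraMap_mem _ (algebraMap S L h₁))
        · simpa [hY, ← IsScalarTower.algebraMap_apply S L K] using
            add_mem e2 (Subalgebra.algebraMap_mem _ (algebraMap S L h₂))
    · rw [hdeg]; simp [sq]
  have hdvd : ∀ (k : ℕ → ℕ → S) (z : K), z ∈ A →
      ∑ i ∈ Finset.range p, ∑ j ∈ Finset.range p, algebraMap S K (k i j) * (X ^ i * Y ^ j)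
        = p * z → ∀ i j, i < p → j < p → (p : S) ∣ k i j := by
    intro k z hz h i j hi hj
    obtain ⟨l, rfl⟩ := hcoord z hz
    refine ⟨l i j, ?_⟩
    have h0 := Fintype.linearIndependent_iff.1 hLI
      (fun ij => algebraMap S L (k ij.1 ij.2 - p * l ij.1 ij.2)) (by
        rw [Fintype.sum_prod_type]
        rw [← sub_eq_zero, Finset.mul_sum, ← Finset.sum_sub_distrib, Finset.sum_range] at h
        rw [← h]
        refine Finset.sum_congr rfl fun i _ => ?_
        rw [Finset.mul_sum, ← Finset.sum_sub_distrib, Finset.sum_range]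
        refine Finset.sum_congr rfl fun j _ => ?_
        rw [Algebra.smul_def, ← IsScalarTower.algebraMap_apply S L K]
        simp only [map_sub, map_mul, map_natCast]
        ring) (⟨i, hi⟩, ⟨j, hj⟩)
    have h1 := (map_eq_zero_iff _ (IsFractionRing.injective S L)).1 h0
    exact sub_eq_zero.1 h1
  obtain ⟨n, rfl⟩ : ∃ n, p = n + 1 := ⟨p - 1, by omega⟩
  rw [Nat.add_sub_cancel]
  ext x
  simp only [Set.mem_setOf_eq]
  constructor
  · intro hx
    have hxp : x * ((n + 1 : ℕ) : K) ∈ A := by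
      simpa using hx ((n + 1 : ℕ) : A) (Ideal.subset_span (by simp))
    have hxX : x * X ∈ A := hx (omegaA ω μ - algebraMap S _ h₁) (Ideal.subset_span (by simp))
    have hxY : x * Y ∈ A := hx (muA ω μ - algebraMap S _ h₂) (Ideal.subset_span (by simp))
    obtain ⟨k, hk⟩ := hcoord _ hxp
    have hi : ∀ i j, i < n → j < n + 1 → ((n + 1 : ℕ) : S) ∣ k i j := by
      intro i j hi hj
      refine hdvd (fun i j => if i = 0 then 0 else k (i - 1) j)
        (x * X - u * ∑ j ∈ Finset.range (n + 1), algebraMap S K (k n j) * Y ^ j) ?_ ?_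
        (i + 1) j (by omega) hj
      · exact sub_mem hxX (mul_mem huA (sum_mem fun j _ =>
          mul_mem (A.algebraMap_mem _) (pow_mem hYA _)))
      · rw [mul_sub, ← mul_assoc, ← mul_assoc, mul_comm _ x, hk, ← hu, Finset.sum_range_succ',
          Finset.sum_range_succ (n := n) (f := fun i => ∑ j ∈ Finset.range (n + 1),
            algebraMap S K (k i j) * (X ^ i * Y ^ j)), add_mul, Finset.sum_mul, Finset.sum_mul,
          Finset.mul_sum]
        have e1 : ∑ j ∈ Finset.range (n + 1), algebraMap S K (k n j) * (X ^ n * Y ^ j) * X =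
          ∑ j ∈ Finset.range (n + 1), X ^ (n + 1) * (algebraMap S K (k n j) * Y ^ j) :=
            Finset.sum_congr rfl fun j _ => by ring
        rw [e1, add_sub_cancel_right]
        simp only [if_true, map_zero, zero_mul, Finset.sum_const_zero, add_zero]
        refine Finset.sum_congr rfl fun i _ => ?_
        rw [Finset.sum_mul]
        refine Finset.sum_congr rfl fun j _ => ?_
        rw [if_neg (by omega), Nat.add_sub_cancel]
        ring
    have hj : ∀ i j, i < n + 1 → j < n → ((n + 1 : ℕ) : S) ∣ k i j := by
      intro i j hi hj
      refine hdvd (fun i j => if j = 0 then 0 else k i (j - 1))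
        (x * Y - v * ∑ i ∈ Finset.range (n + 1), algebraMap S K (k i n) * X ^ i) ?_ ?_
        i (j + 1) hi (by omega)
      · exact sub_mem hxY (mul_mem hvA (sum_mem fun j _ =>
          mul_mem (A.algebraMap_mem _) (pow_mem hXA _)))
      · rw [mul_sub, ← mul_assoc, ← mul_assoc, mul_comm _ x, hk, ← hv, Finset.sum_mul,
          Finset.mul_sum, ← Finset.sum_sub_distrib]
        refine Finset.sum_congr rfl fun i _ => ?_
        rw [Finset.sum_range_succ', Finset.sum_range_succ (n := n), add_mul, Finset.sum_mul]
        have e1 : algebraMap S K (k i n) * (X ^ i * Y ^ n) * Y =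
          Y ^ (n + 1) * (algebraMap S K (k i n) * X ^ i) := by ring
        rw [e1, add_sub_cancel_right]
        simp only [if_true, map_zero, zero_mul, add_zero]
        refine Finset.sum_congr rfl fun j _ => ?_
        rw [if_neg (by omega), Nat.add_sub_cancel]
        ring
    have hxe : x = ∑ i ∈ Finset.range (n + 1), ∑ j ∈ Finset.range (n + 1),
        (((n + 1 : ℕ) : K)⁻¹ * (algebraMap S K (k i j) * (X ^ i * Y ^ j))) := by
      simp only [← Finset.mul_sum]
      rw [← hk]
      field_simp
    have hadd : ∀ y z : K, (∃ α β : A, y = (α : K) + β * (((n + 1 : ℕ) : K)⁻¹ * (X ^ n * Y ^ n))) →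
        (∃ α β : A, z = (α : K) + β * (((n + 1 : ℕ) : K)⁻¹ * (X ^ n * Y ^ n))) →
        (∃ α β : A, y + z = (α : K) + β * (((n + 1 : ℕ) : K)⁻¹ * (X ^ n * Y ^ n))) := by
      rintro y z ⟨α, β, rfl⟩ ⟨α', β', rfl⟩
      exact ⟨α + α', β + β', by push_cast; ring⟩
    have hzero : ∃ α β : A, (0 : K) = (α : K) + β * (((n + 1 : ℕ) : K)⁻¹ * (X ^ n * Y ^ n)) :=
      ⟨0, 0, by simp⟩
    rw [hxe]
    refine Finset.sum_induction _ _ hadd hzero fun i hir => ?_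
    refine Finset.sum_induction _ _ hadd hzero fun j hjr => ?_
    rw [Finset.mem_range] at hir hjr
    by_cases hij : i = n ∧ j = n
    · rw [hij.1, hij.2]
      exact ⟨0, algebraMap S A (k n n), by
        rw [show ((algebraMap S A (k n n) : A) : K) = algebraMap S K (k n n) from rfl]
        simp only [ZeroMemClass.coe_zero]; ring⟩
    · obtain ⟨q, hq⟩ : ((n + 1 : ℕ) : S) ∣ k i j := by
        rcases lt_or_ge i n with h | h
        · exact hi i j h hjr
        · exact hj i j hir (by omega)
      refine ⟨⟨algebraMap S K q * (X ^ i * Y ^ j), mul_mem (A.algebraMap_mem _)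
        (mul_mem (pow_mem hXA _) (pow_mem hYA _))⟩, 0, ?_⟩
      rw [hq, map_mul, map_natCast]
      simp only [ZeroMemClass.coe_zero, zero_mul, add_zero]
      field_simp
  · rintro ⟨α, β, rfl⟩ z hz
    rw [add_mul]
    refine add_mem (mul_mem α.2 z.2) ?_
    rw [mul_assoc]
    refine mul_mem β.2 ?_
    unfold Pid at hz
    induction hz using Submodule.span_induction with
    | mem t ht =>
      rcases ht with rfl | rfl | rfl
      · have : ((n + 1 : ℕ) : K)⁻¹ * (X ^ n * Y ^ n) * (((n + 1 : ℕ) : A) : K) = X ^ n * Y ^ n := by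
          rw [show (((n + 1 : ℕ) : A) : K) = ((n + 1 : ℕ) : K) from by simp]
          field_simp
        rw [this]
        exact mul_mem (pow_mem hXA _) (pow_mem hYA _)
      · have : ((n + 1 : ℕ) : K)⁻¹ * (X ^ n * Y ^ n) * X = u * Y ^ n := by
          have : X ^ n * Y ^ n * X = ((n + 1 : ℕ) : K) * u * Y ^ n := by rw [← hu]; ring
          rw [mul_assoc, this]; field_simp
        exact this ▸ mul_mem huA (pow_mem hYA _)
      · have : ((n + 1 : ℕ) : K)⁻¹ * (X ^ n * Y ^ n) * Y = v * X ^ n := by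
          have : X ^ n * Y ^ n * Y = ((n + 1 : ℕ) : K) * v * X ^ n := by rw [← hv]; ring
          rw [mul_assoc, this]; field_simp
        exact this ▸ mul_mem hvA (pow_mem hXA _)
    | zero => simp
    | add s t _ _ hs ht =>
      rw [show ((s + t : A) : K) = (s : K) + t from rfl, mul_add]; exact add_mem hs ht
    | smul r t _ ht =>
      rw [show ((r • t : A) : K) = (r : K) * t from rfl, mul_left_comm]; exact mul_mem r.2 ht
end
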